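/- arXiv:1410.8198 — 5 statements merged into one kernel-verified Lean document; each statement's English description precedes it below -/
import Mathlib

section
/- There is an absolute constant c > 0 with the following property. Let k ≥ m ≥ 1 be integers with k ≥ 3. Then there exists x_0 (depending on m and k) such that for all real x ≥ x_0, with N_x = {n ∈ ℤ : −x < n ≤ x and gcd(n, ∏_{p ≤ k, p prime} p) = 1}, the number of m-tuples h ∈ N_x^m satisfying ∏_{p ≤ k, p prime} (1 − n_p(h)/p) · (1 − 1/p)^{−m} > (log 3m)^{cm} · (log log k)^{m−1} is at most |N_x|^m / (16m · C(k−1, m−1)), where C(n,r) denotes the binomial coefficient. -/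
open Filter

/-- `N_x`: the set of integers `n` with `-x < n ≤ x` that are coprime to the product
of the primes up to `k`. -/
def Nset (k : ℕ) (x : ℝ) : Set ℤ :=
  {n : ℤ | -x < (n : ℝ) ∧ (n : ℝ) ≤ x ∧
    Int.gcd n ((∏ p ∈ Finset.filter Nat.Prime (Finset.range (k + 1)), p : ℕ) : ℤ) = 1}

/-- `n_p(h)`: the number of distinct residue classes mod `p` among the entries of `h`. -/
def residCount (p : ℕ) {m : ℕ} (h : Fin m → ℤ) : ℕ :=
  (Finset.image (fun i => ((h i : ZMod p))) Finset.univ).card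

theorem sum_log_primesLE_mul_div_le_log_factorial (n : ℕ) :
    ∑ p ∈ n.primesLE, ((n / p : ℕ) : ℝ) * Real.log p ≤ Real.log n.factorial := by
  have h1 : Real.log n.factorial = ∑ j ∈ Finset.Ioc 0 n, Real.log j := by
    rw [← Finset.prod_Ico_id_eq_factorial, Nat.cast_prod, Real.log_prod]
    · rfl
    · intro j hj
      have := (Finset.mem_Ico.mp hj).1
      positivity
  have h2 : ∀ p ∈ n.primesLE, ((n / p : ℕ) : ℝ) * Real.log p =
      ∑ j ∈ Finset.Ioc 0 n, if p ∣ j then Real.log p else 0 := by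
    intro p _
    rw [← Finset.sum_filter, Finset.sum_const, Nat.Ioc_filter_dvd_card_eq_div, nsmul_eq_mul]
  rw [h1, Finset.sum_congr rfl h2, Finset.sum_comm]
  refine Finset.sum_le_sum fun j hj => ?_
  obtain ⟨hj0, hjn⟩ := Finset.mem_Ioc.mp hj
  rw [← Finset.sum_filter]
  have h3 : {p ∈ n.primesLE | p ∣ j} = j.primeFactors := by
    ext p
    simp only [Finset.mem_filter, Nat.mem_primesLE, Nat.mem_primeFactors]
    constructor
    · rintro ⟨⟨_, hp⟩, hd⟩
      exact ⟨hp, hd, hj0.ne'⟩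
    · rintro ⟨hp, hd, _⟩
      exact ⟨⟨(Nat.le_of_dvd hj0 hd).trans hjn, hp⟩, hd⟩
  rw [h3, ← Real.log_prod fun p hp => by
    exact_mod_cast (Nat.prime_of_mem_primeFactors hp).ne_zero, ← Nat.cast_prod]
  refine Real.log_le_log ?_ ?_
  · exact_mod_cast Finset.prod_pos fun p hp => (Nat.prime_of_mem_primeFactors hp).pos
  · exact_mod_cast Nat.le_of_dvd hj0 (Nat.prod_primeFactors_dvd j)

theorem sum_log_div_primesLE_le {n : ℕ} (hn : 1 ≤ n) :
    ∑ p ∈ n.primesLE, Real.log p / p ≤ 2 * Real.log n := by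
  have hn0 : (0 : ℝ) < n := by exact_mod_cast hn
  have h1 := sum_log_primesLE_mul_div_le_log_factorial n
  have h2 : Real.log n.factorial ≤ n * Real.log n := by
    rw [← Real.log_pow]
    exact Real.log_le_log (by exact_mod_cast n.factorial_pos)
      (by exact_mod_cast n.factorial_le_pow)
  have h3 : n / 2 * ∑ p ∈ n.primesLE, Real.log p / p ≤
      ∑ p ∈ n.primesLE, ((n / p : ℕ) : ℝ) * Real.log p := by
    rw [Finset.mul_sum]
    refine Finset.sum_le_sum fun p hp => ?_
    obtain ⟨hpn, hpp⟩ := Nat.mem_primesLE.mp hp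
    have hp0 : (0 : ℝ) < p := by exact_mod_cast hpp.pos
    have h4 : n < 2 * (n / p) * p := by
      have := Nat.div_pos hpn hpp.pos
      have := Nat.lt_div_mul_add (a := n) hpp.pos
      nlinarith
    have h5 : (n : ℝ) < 2 * (n / p : ℕ) * p := by exact_mod_cast h4
    have h6 : (n : ℝ) / 2 / p ≤ (n / p : ℕ) := by
      rw [div_div, div_le_iff₀ (by positivity)]
      linarith
    calc (n : ℝ) / 2 * (Real.log p / p) = n / 2 / p * Real.log p := by ring
      _ ≤ _ := by gcongr
  have h7 : (n : ℝ) * ∑ p ∈ n.primesLE, Real.log p / p ≤ n * (2 * Real.log n) := by linarith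
  exact le_of_mul_le_mul_left h7 hn0

theorem prod_primesLE_one_sub_rpow_inv_le {s : ℝ} (hs : 1 < s) (n : ℕ) :
    ∏ p ∈ n.primesLE, (1 - (p : ℝ) ^ (-s))⁻¹ ≤ 1 + 1 / (s - 1) := by
  let f : ℕ →* ℝ :=
    { toFun := fun j => (j : ℝ) ^ (-s)
      map_one' := by simp
      map_mul' := fun a b => by
        simp only [Nat.cast_mul]
        exact Real.mul_rpow (by positivity) (by positivity) }
  have hsum : Summable f := Real.summable_nat_rpow.mpr (by linarith)
  have h0 : ∀ j, 0 ≤ f j := fun j => Real.rpow_nonneg (by positivity) _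
  have h1 := EulerProduct.prod_primesBelow_geometric_eq_tsum_smoothNumbers hsum (n + 1)
  have h2 : ∑' j : (n + 1).smoothNumbers, f j ≤ ∑' j, f j := hsum.tsum_subtype_le f _ h0
  have h3 : ∑' j, f j = ∑' j : ℕ, 1 / (j + 1 : ℝ) ^ s := by
    rw [hsum.tsum_eq_zero_add]
    have : f 0 = 0 := by
      change ((0 : ℕ) : ℝ) ^ (-s) = 0
      rw [Nat.cast_zero, Real.zero_rpow (by linarith)]
    rw [this, zero_add]
    refine tsum_congr fun j => ?_
    change ((j + 1 : ℕ) : ℝ) ^ (-s) = _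
    rw [Real.rpow_neg (by positivity)]
    simp
  have h4 := ZetaAsymptotics.zeta_limit_aux1 hs
  have h5 : 0 ≤ s * ZetaAsymptotics.termTSum s :=
    mul_nonneg (by linarith) (tsum_nonneg fun j => ZetaAsymptotics.term_nonneg _ _)
  calc _ = ∑' j : (n + 1).smoothNumbers, f j := h1
    _ ≤ _ := by linarith

/-- An upper bound of Mertens type. -/
theorem prod_primesLE_one_sub_inv_inv_le {n : ℕ} (hn : 2 ≤ n) :
    ∏ p ∈ n.primesLE, (1 - 1 / (p : ℝ))⁻¹ ≤ 3 * Real.exp 4 * Real.log n := by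
  have hn2 : (2 : ℝ) ≤ n := by exact_mod_cast hn
  have hlog2 : 1 / 2 < Real.log n :=
    lt_of_lt_of_le (by linarith [Real.log_two_gt_d9]) (Real.log_le_log (by norm_num) hn2)
  set σ : ℝ := 1 / Real.log n with hσ
  have hσ0 : 0 < σ := by positivity
  have key : ∀ p ∈ n.primesLE, (1 - 1 / (p : ℝ))⁻¹ ≤
      Real.exp (2 * σ * (Real.log p / p)) * (1 - (p : ℝ) ^ (-(1 + σ)))⁻¹ := by
    intro p hp
    obtain ⟨hpn, hpp⟩ := Nat.mem_primesLE.mp hp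
    have hp2 : (2 : ℝ) ≤ p := by exact_mod_cast hpp.two_le
    have hp0 : (0 : ℝ) < p := by linarith
    have hinv : 1 / (p : ℝ) ≤ 1 / 2 := one_div_le_one_div_of_le (by norm_num) hp2
    have e1 : (p : ℝ) ^ (-(1 + σ)) = 1 / p * Real.exp (-(σ * Real.log p)) := by
      rw [neg_add, Real.rpow_add hp0, Real.rpow_neg_one, Real.rpow_def_of_pos hp0]
      congr 2
      · simp
      · ring
    have e2 : 1 / (p : ℝ) * (1 - σ * Real.log p) ≤ (p : ℝ) ^ (-(1 + σ)) := by
      rw [e1]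
      gcongr
      linarith [Real.add_one_le_exp (-(σ * Real.log p))]
    have hlogp : 0 ≤ Real.log p := Real.log_natCast_nonneg p
    have e3 : (p : ℝ) ^ (-(1 + σ)) < 1 :=
      Real.rpow_lt_one_of_one_lt_of_neg (by linarith) (by linarith)
    have e4 := Real.add_one_le_exp (2 * σ * (Real.log p / p))
    set w := σ * (Real.log p / p) with hw
    have hw0 : 0 ≤ w := by positivity
    have e5 : 1 / (p : ℝ) - w ≤ (p : ℝ) ^ (-(1 + σ)) := by
      refine le_trans (le_of_eq ?_) e2
      rw [hw]; ring
    rw [← div_eq_mul_inv, inv_eq_one_div, div_le_div_iff₀ (by linarith) (by linarith)]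
    have e6 : 2 * σ * (Real.log p / p) = 2 * w := by rw [hw]; ring
    rw [e6] at e4 ⊢
    nlinarith [mul_le_mul_of_nonneg_right e4 (by linarith : 0 ≤ 1 - 1 / (p : ℝ))]
  calc ∏ p ∈ n.primesLE, (1 - 1 / (p : ℝ))⁻¹
      ≤ ∏ p ∈ n.primesLE,
        (Real.exp (2 * σ * (Real.log p / p)) * (1 - (p : ℝ) ^ (-(1 + σ)))⁻¹) := by
        refine Finset.prod_le_prod (fun p hp => ?_) key
        have hp2 : (1 : ℝ) ≤ p := by exact_mod_cast (Nat.mem_primesLE.mp hp).2.one_lt.le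
        have : 1 / (p : ℝ) ≤ 1 := by rw [div_le_one (by linarith)]; exact hp2
        exact inv_nonneg.mpr (by linarith)
    _ = Real.exp (2 * σ * ∑ p ∈ n.primesLE, Real.log p / p) *
        ∏ p ∈ n.primesLE, (1 - (p : ℝ) ^ (-(1 + σ)))⁻¹ := by
        rw [Finset.prod_mul_distrib, Finset.mul_sum, Real.exp_sum]
    _ ≤ Real.exp 4 * (1 + 1 / ((1 + σ) - 1)) := by
        refine mul_le_mul (Real.exp_le_exp.mpr ?_)
          (prod_primesLE_one_sub_rpow_inv_le (by linarith) n)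
          (Finset.prod_nonneg fun p hp => inv_nonneg.mpr ?_) (Real.exp_pos 4).le
        · have h1 := sum_log_div_primesLE_le (show 1 ≤ n by lia)
          calc 2 * σ * ∑ p ∈ n.primesLE, Real.log p / p ≤ 2 * σ * (2 * Real.log n) := by gcongr
            _ = 4 := by rw [hσ]; field_simp; norm_num
        · have hp1 : (1 : ℝ) < p := by exact_mod_cast (Nat.mem_primesLE.mp hp).2.one_lt
          linarith [Real.rpow_lt_one_of_one_lt_of_neg hp1 (by linarith : -(1 + σ) < 0)]
    _ = Real.exp 4 * (1 + Real.log n) := by rw [hσ]; simp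
    _ ≤ 3 * Real.exp 4 * Real.log n := by nlinarith [Real.exp_pos 4]

theorem sum_piFinset_pow_sub_card_image_le {α : Type*} [DecidableEq α] (U : Finset α) {w : ℝ}
    (hw : 1 ≤ w) (m : ℕ) {j : ℕ} (hj : j ≤ m) :
    ∑ v ∈ Fintype.piFinset (fun _ : Fin j => U), w ^ (j - (Finset.univ.image v).card) ≤
      (U.card + m * (w - 1)) ^ j := by
  induction j with
  | zero => simp
  | succ j ih =>
    have h1 : ∑ v ∈ Fintype.piFinset (fun _ : Fin (j + 1) => U),
        w ^ (j + 1 - (Finset.univ.image v).card) =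
        ∑ v ∈ Fintype.piFinset (fun _ : Fin j => U), ∑ a ∈ U,
          w ^ (j + 1 - (insert a (Finset.univ.image v)).card) := by
      rw [Finset.sum_comm, ← Finset.sum_product']
      refine Finset.sum_nbij' (fun v => (v 0, fun i => v i.succ))
        (fun q => Fin.cons q.1 q.2) ?_ ?_ ?_ ?_ ?_
      · intro v hv
        simp only [Fintype.mem_piFinset, Finset.mem_product] at hv ⊢
        exact ⟨hv 0, fun i => hv _⟩
      · rintro ⟨a, v⟩ hv
        simp only [Fintype.mem_piFinset, Finset.mem_product] at hv ⊢
        exact fun i => Fin.cases hv.1 hv.2 i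
      · intro v _
        exact Fin.cons_self_tail v
      · rintro ⟨a, v⟩ _
        simp
      · intro v _
        congr 3
        ext b
        simp [Fin.exists_fin_succ, eq_comm]
    rw [h1]
    have h2 : ∀ v : Fin j → α, ∑ a ∈ U, w ^ (j + 1 - (insert a (Finset.univ.image v)).card) ≤
        w ^ (j - (Finset.univ.image v).card) * (U.card + m * (w - 1)) := by
      intro v
      have hcard : (Finset.univ.image v).card ≤ j := by
        simpa using Finset.card_image_le (s := (Finset.univ : Finset (Fin j))) (f := v)
      have h3 : ∀ a ∈ U, w ^ (j + 1 - (insert a (Finset.univ.image v)).card) =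
          w ^ (j - (Finset.univ.image v).card) *
            (1 + if a ∈ Finset.univ.image v then (w - 1) else 0) := by
        intro a _
        by_cases ha : a ∈ Finset.univ.image v
        · rw [Finset.insert_eq_of_mem ha, if_pos ha, Nat.sub_add_comm hcard, pow_succ]
          ring
        · rw [Finset.card_insert_of_notMem ha, if_neg ha, Nat.add_sub_add_right]
          ring
      rw [Finset.sum_congr rfl h3, ← Finset.mul_sum, Finset.sum_add_distrib, ← Finset.sum_filter]
      have h4 : ({a ∈ U | a ∈ Finset.univ.image v}.card : ℝ) ≤ m := by
        have : {a ∈ U | a ∈ Finset.univ.image v}.card ≤ (Finset.univ.image v).card :=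
          Finset.card_le_card fun a ha => (Finset.mem_filter.mp ha).2
        exact_mod_cast this.trans (hcard.trans (by lia))
      simp only [Finset.sum_const, nsmul_eq_mul, mul_one]
      have : 0 ≤ w - 1 := by linarith
      gcongr
    calc _ ≤ ∑ v ∈ Fintype.piFinset (fun _ : Fin j => U),
          w ^ (j - (Finset.univ.image v).card) * (U.card + m * (w - 1)) :=
          Finset.sum_le_sum fun v _ => h2 v
      _ ≤ (U.card + m * (w - 1)) ^ j * (U.card + m * (w - 1)) := by
          rw [← Finset.sum_mul]
          have : 0 ≤ w - 1 := by linarith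
          gcongr
          exact ih (by lia)
      _ = _ := (pow_succ _ _).symm

theorem card_Ioc_filter_modEq_bounds {a b : ℤ} (hab : a ≤ b) {r : ℕ} (hr : 0 < r) (v : ℤ) :
    ((b - a : ℝ) / r - 1 ≤ ({n ∈ Finset.Ioc a b | n ≡ v [ZMOD r]}.card : ℝ)) ∧
      (({n ∈ Finset.Ioc a b | n ≡ v [ZMOD r]}.card : ℝ) ≤ (b - a : ℝ) / r + 1) := by
  have hr' : (0 : ℤ) < r := by exact_mod_cast hr
  have h := Int.Ioc_filter_modEq_card a b hr' v
  have hrq : (0 : ℚ) < ((r : ℤ) : ℚ) := by exact_mod_cast hr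
  have hle : ⌊((a : ℚ) - v) / ((r : ℤ) : ℚ)⌋ ≤ ⌊((b : ℚ) - v) / ((r : ℤ) : ℚ)⌋ := by
    have : (a : ℚ) ≤ b := by exact_mod_cast hab
    gcongr
  rw [max_eq_left (by lia)] at h
  have hq : ((b - a : ℚ) / r - 1 ≤ ({n ∈ Finset.Ioc a b | n ≡ v [ZMOD r]}.card : ℚ)) ∧
      (({n ∈ Finset.Ioc a b | n ≡ v [ZMOD r]}.card : ℚ) ≤ (b - a : ℚ) / r + 1) := by
    have h' : ({n ∈ Finset.Ioc a b | n ≡ v [ZMOD r]}.card : ℚ) =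
      ⌊((b : ℚ) - v) / ((r : ℤ) : ℚ)⌋ - ⌊((a : ℚ) - v) / ((r : ℤ) : ℚ)⌋ := by exact_mod_cast h
    have e : (b - a : ℚ) / r = (b - v) / ((r : ℤ) : ℚ) - (a - v) / ((r : ℤ) : ℚ) := by
      rw [← sub_div, Int.cast_natCast]; ring
    rw [h', e]
    have h1 := Int.floor_le (((b : ℚ) - v) / ((r : ℤ) : ℚ))
    have h2 := Int.lt_floor_add_one (((b : ℚ) - v) / ((r : ℤ) : ℚ))
    have h3 := Int.floor_le (((a : ℚ) - v) / ((r : ℤ) : ℚ))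
    have h4 := Int.lt_floor_add_one (((a : ℚ) - v) / ((r : ℤ) : ℚ))
    constructor <;> linarith
  exact_mod_cast hq

/-- The integers in `(a, b]` that are coprime to `P`. -/
noncomputable def coprimeIoc (a b : ℤ) (P : ℕ) : Finset ℤ := {n ∈ Finset.Ioc a b | Int.gcd n P = 1}

theorem totient_mul_le_card_coprimeIoc {a b : ℤ} (hab : a ≤ b) {P : ℕ} (hP : 0 < P) :
    (P.totient : ℝ) * ((b - a : ℝ) / P - 1) ≤ (coprimeIoc a b P).card := by
  have hsub : (({v ∈ Finset.range P | P.Coprime v}.biUnion fun v =>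
      {n ∈ Finset.Ioc a b | n ≡ (v : ℤ) [ZMOD P]})) ⊆ coprimeIoc a b P := by
    intro n hn
    simp only [Finset.mem_biUnion, Finset.mem_filter] at hn
    obtain ⟨v, ⟨_, hv⟩, hn, hmod⟩ := hn
    refine Finset.mem_filter.mpr ⟨hn, ?_⟩
    rw [← Int.gcd_emod, hmod, Int.gcd_emod, Int.gcd_natCast_natCast]
    exact hv.symm
  have hdisj : (({v ∈ Finset.range P | P.Coprime v} : Finset ℕ) : Set ℕ).PairwiseDisjoint fun v =>
      {n ∈ Finset.Ioc a b | n ≡ (v : ℤ) [ZMOD P]} := by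
    intro u hu v hv huv
    refine Finset.disjoint_left.mpr fun n hn hn' => huv ?_
    have h1 := ((Finset.mem_filter.mp hn).2.symm.trans (Finset.mem_filter.mp hn').2)
    have h2 : u ≡ v [MOD P] := (Int.natCast_modEq_iff).mp h1
    exact h2.eq_of_lt_of_lt (Finset.mem_range.mp (Finset.mem_filter.mp hu).1)
      (Finset.mem_range.mp (Finset.mem_filter.mp hv).1)
  have hc := Finset.card_le_card hsub
  rw [Finset.card_biUnion hdisj] at hc
  calc (P.totient : ℝ) * ((b - a : ℝ) / P - 1)
      = ∑ v ∈ Finset.range P with P.Coprime v, ((b - a : ℝ) / P - 1) := by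
        rw [Finset.sum_const, nsmul_eq_mul, Nat.totient]
    _ ≤ ∑ v ∈ Finset.range P with P.Coprime v,
        ({n ∈ Finset.Ioc a b | n ≡ (v : ℤ) [ZMOD P]}.card : ℝ) :=
        Finset.sum_le_sum fun v _ => (card_Ioc_filter_modEq_bounds hab hP v).1
    _ ≤ _ := by exact_mod_cast hc

theorem card_filter_forall_emod_eq_le {a b : ℤ} (hab : a ≤ b) {S : Finset ℕ}
    (hS : ∀ p ∈ S, p.Prime) (P : ℕ) (r : S → ℤ) :
    ({n ∈ coprimeIoc a b P | ∀ p : S, n % (p : ℕ) = r p}.card : ℝ) ≤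
      (b - a : ℝ) / (∏ p ∈ S, p : ℕ) + 1 := by
  have hpos : 0 < ∏ p ∈ S, p := Finset.prod_pos fun p hp => (hS p hp).pos
  rcases Finset.eq_empty_or_nonempty {n ∈ coprimeIoc a b P | ∀ p : S, n % (p : ℕ) = r p}
    with h | ⟨v, hv⟩
  · rw [h]
    have : (a : ℝ) ≤ b := by exact_mod_cast hab
    have : (0 : ℝ) ≤ b - a := by linarith
    simp only [Finset.card_empty, Nat.cast_zero]
    positivity
  · refine le_trans ?_ (card_Ioc_filter_modEq_bounds hab hpos v).2
    refine Nat.cast_le.mpr (Finset.card_le_card fun n hn => ?_)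
    obtain ⟨hn1, hn2⟩ := Finset.mem_filter.mp hn
    refine Finset.mem_filter.mpr ⟨(Finset.mem_filter.mp hn1).1, ?_⟩
    refine (Int.modEq_iff_dvd.mpr ?_)
    rw [Nat.cast_prod]
    refine Finset.prod_dvd_of_coprime (fun p hp q hq hpq => ?_) fun p hp => ?_
    · exact Nat.isCoprime_iff_coprime.mpr ((Nat.coprime_primes (hS p hp) (hS q hq)).mpr hpq)
    · refine Int.ModEq.dvd ?_
      exact (hn2 ⟨p, hp⟩).trans ((Finset.mem_filter.mp hv).2 ⟨p, hp⟩).symm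

theorem residCount_eq_card_image_emod (p : ℕ) {m : ℕ} (h : Fin m → ℤ) :
    residCount p h = (Finset.univ.image fun i => h i % (p : ℤ)).card := by
  have : Finset.univ.image (fun i => (h i : ZMod p)) =
      (Finset.univ.image fun i => h i % (p : ℤ)).image (fun n : ℤ => (n : ZMod p)) := by
    rw [Finset.image_image]
    congr 1
    ext i
    simp
  rw [residCount, this, Finset.card_image_of_injOn]
  intro u hu v hv huv
  simp only [Finset.coe_image, Finset.coe_univ, Set.image_univ, Set.mem_range] at hu hv
  obtain ⟨i, rfl⟩ := hu
  obtain ⟨j, rfl⟩ := hv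
  simpa [Int.ModEq] using (ZMod.intCast_eq_intCast_iff _ _ _).mp huv

theorem sum_prod_pow_sub_residCount_le {a b : ℤ} (hab : a ≤ b) {S : Finset ℕ}
    (hS : ∀ p ∈ S, p.Prime) (m : ℕ) {w : ℕ → ℝ} (hw : ∀ p, 1 ≤ w p) :
    ∑ h ∈ Fintype.piFinset (fun _ : Fin m => coprimeIoc a b (∏ p ∈ S, p)),
        ∏ p ∈ S, w p ^ (m - residCount p h) ≤
      ((b - a : ℝ) / (∏ p ∈ S, p : ℕ) + 1) ^ m *
        ∏ p ∈ S, ((p - 1 : ℝ) + m * (w p - 1)) ^ m := by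
  set P := ∏ p ∈ S, p with hP
  set Q := (b - a : ℝ) / (P : ℕ) + 1
  let t : S → Finset (Fin m → ℤ) := fun p => Fintype.piFinset fun _ => Finset.Ico 1 (p : ℤ)
  let R : (Fin m → ℤ) → S → Fin m → ℤ := fun h p i => h i % ((p : ℕ) : ℤ)
  let g : S → (Fin m → ℤ) → ℝ := fun p v => w p ^ (m - (Finset.univ.image v).card)
  have hg : ∀ p v, 0 ≤ g p v := fun p v => pow_nonneg (zero_le_one.trans (hw p)) _
  have hmaps : ∀ h ∈ Fintype.piFinset (fun _ : Fin m => coprimeIoc a b P),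
      R h ∈ Fintype.piFinset t := by
    intro h hh
    refine Fintype.mem_piFinset.mpr fun p => Fintype.mem_piFinset.mpr fun i => ?_
    have hp := hS p p.2
    have hcop := (Finset.mem_filter.mp (Fintype.mem_piFinset.mp hh i)).2
    have hp0 : (0 : ℤ) < (p : ℕ) := by exact_mod_cast hp.pos
    refine Finset.mem_Ico.mpr ⟨?_, Int.emod_lt_of_pos _ hp0⟩
    refine lt_of_le_of_ne (Int.emod_nonneg _ hp0.ne') fun h0 => ?_
    have h1 : ((p : ℕ) : ℤ) ∣ h i := Int.dvd_of_emod_eq_zero h0.symm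
    have h2 : ((p : ℕ) : ℤ) ∣ (P : ℤ) := by exact_mod_cast Finset.dvd_prod_of_mem _ p.2
    have h3 := Int.dvd_gcd h1 h2
    rw [hcop] at h3
    exact hp.one_lt.ne' (Nat.dvd_one.mp (by exact_mod_cast h3))
  have hprod : ∀ h : Fin m → ℤ, ∏ p ∈ S, w p ^ (m - residCount p h) = ∏ p : S, g p (R h p) := by
    intro h
    rw [← Finset.prod_coe_sort]
    refine Finset.prod_congr rfl fun p _ => ?_
    rw [residCount_eq_card_image_emod]
  have hQ0 : 0 ≤ Q := by
    have : (a : ℝ) ≤ b := by exact_mod_cast hab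
    have : (0 : ℝ) ≤ b - a := by linarith
    positivity
  have hfib : ∀ r : S → Fin m → ℤ,
      ({h ∈ Fintype.piFinset (fun _ : Fin m => coprimeIoc a b P) | R h = r}.card : ℝ) ≤ Q ^ m := by
    intro r
    have hsub : {h ∈ Fintype.piFinset (fun _ : Fin m => coprimeIoc a b P) | R h = r} ⊆
        Fintype.piFinset fun i => {n ∈ coprimeIoc a b P | ∀ p : S, n % (p : ℕ) = r p i} := by
      intro h hh
      obtain ⟨h1, h2⟩ := Finset.mem_filter.mp hh
      refine Fintype.mem_piFinset.mpr fun i =>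
        Finset.mem_filter.mpr ⟨Fintype.mem_piFinset.mp h1 i, fun p => ?_⟩
      rw [← h2]
    have hc := Finset.card_le_card hsub
    rw [Fintype.card_piFinset] at hc
    calc _ ≤ ∏ i, ({n ∈ coprimeIoc a b P | ∀ p : S, n % (p : ℕ) = r p i}.card : ℝ) := by
          exact_mod_cast hc
      _ ≤ ∏ _i : Fin m, Q := Finset.prod_le_prod (fun _ _ => Nat.cast_nonneg _) fun i _ =>
          card_filter_forall_emod_eq_le hab hS P fun p => r p i
      _ = Q ^ m := by simp
  calc _ = ∑ r ∈ Fintype.piFinset t,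
        ∑ h ∈ Fintype.piFinset (fun _ : Fin m => coprimeIoc a b P) with R h = r,
          ∏ p : S, g p (R h p) := by
        rw [Finset.sum_fiberwise_of_maps_to hmaps]
        exact Finset.sum_congr rfl fun h _ => hprod h
    _ ≤ ∑ r ∈ Fintype.piFinset t, Q ^ m * ∏ p : S, g p (r p) := by
        refine Finset.sum_le_sum fun r _ => ?_
        rw [Finset.sum_congr rfl fun h hh => by rw [(Finset.mem_filter.mp hh).2],
          Finset.sum_const, nsmul_eq_mul]
        exact mul_le_mul_of_nonneg_right (hfib r) (Finset.prod_nonneg fun p _ => hg p _)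
    _ = Q ^ m * ∏ p : S, ∑ v ∈ t p, g p v := by
        rw [← Finset.mul_sum, Finset.prod_univ_sum]
    _ ≤ Q ^ m * ∏ p : S, (((p : ℕ) - 1 : ℝ) + m * (w p - 1)) ^ m := by
        refine mul_le_mul_of_nonneg_left (Finset.prod_le_prod
          (fun p _ => Finset.sum_nonneg fun v _ => hg p v) fun p _ => ?_) (pow_nonneg hQ0 m)
        have := sum_piFinset_pow_sub_card_image_le (Finset.Ico 1 ((p : ℕ) : ℤ)) (hw p) m le_rfl
        refine this.trans (le_of_eq ?_)
        have hcard : ((Finset.Ico 1 ((p : ℕ) : ℤ)).card : ℝ) = (p : ℕ) - 1 := by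
          have h1 : (((p : ℕ) : ℤ) - 1).toNat = p - 1 := by lia
          rw [Int.card_Ico, h1, Nat.cast_pred (hS p p.2).pos]
        rw [hcard]
    _ = _ := by
        rw [← Finset.prod_coe_sort S fun p => ((p - 1 : ℝ) + m * (w p - 1)) ^ m]

/-- The weight `1 / (p - 1)` given to a prime `p > Y`; smaller primes have weight `0`. -/
noncomputable def largePrimeWeight (Y p : ℕ) : ℝ := if Y < p then 1 / ((p : ℝ) - 1) else 0

theorem one_sub_div_div_one_sub_pow_le {p : ℕ} (hp : p.Prime) {n m : ℕ} (hn : n ≤ m) :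
    (1 - (n : ℝ) / p) / (1 - 1 / (p : ℝ)) ^ m ≤ ((1 - 1 / (p : ℝ))⁻¹) ^ (m - n) := by
  have hp2 : (2 : ℝ) ≤ p := by exact_mod_cast hp.two_le
  have hinv : 1 / (p : ℝ) ≤ 1 / 2 := one_div_le_one_div_of_le (by norm_num) hp2
  have hpos : 0 < 1 - 1 / (p : ℝ) := by linarith
  have hb := one_add_mul_le_pow (a := -(1 / (p : ℝ))) (by linarith) n
  rw [div_le_iff₀ (by positivity)]
  calc 1 - (n : ℝ) / p = 1 + n * -(1 / (p : ℝ)) := by ring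
    _ ≤ (1 - 1 / (p : ℝ)) ^ n := by simpa [sub_eq_add_neg] using hb
    _ = _ := by
        obtain ⟨d, rfl⟩ := Nat.exists_eq_add_of_le hn
        rw [Nat.add_sub_cancel_left, pow_add, inv_pow, mul_left_comm,
          inv_mul_cancel₀ (pow_pos hpos d).ne', mul_one]

theorem prod_primesLE_singular_le {m k Y : ℕ} (hY : 2 ≤ Y) {n : ℕ → ℕ}
    (hn1 : ∀ p, 1 ≤ n p) (hnm : ∀ p, n p ≤ m) (hnp : ∀ p ∈ k.primesLE, n p ≤ p) :
    ∏ p ∈ k.primesLE, (1 - (n p : ℝ) / p) / (1 - 1 / (p : ℝ)) ^ m ≤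
      (3 * Real.exp 4 * Real.log Y) ^ (m - 1) *
        ∏ p ∈ k.primesLE, Real.exp (largePrimeWeight Y p) ^ (m - n p) := by
  have hone : ∀ {p : ℕ}, p.Prime → 1 ≤ (1 - 1 / (p : ℝ))⁻¹ := by
    intro p hp
    have hp2 : (2 : ℝ) ≤ p := by exact_mod_cast hp.two_le
    have hinv : 1 / (p : ℝ) ≤ 1 / 2 := one_div_le_one_div_of_le (by norm_num) hp2
    have : 0 < 1 / (p : ℝ) := by positivity
    exact (one_le_inv₀ (by linarith)).mpr (by linarith)
  have hfac : ∀ p ∈ k.primesLE, (1 - (n p : ℝ) / p) / (1 - 1 / (p : ℝ)) ^ m ≤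
      (if p ≤ Y then ((1 - 1 / (p : ℝ))⁻¹) ^ (m - 1) else 1) *
        Real.exp (largePrimeWeight Y p) ^ (m - n p) := by
    intro p hp
    have hpp := (Nat.mem_primesLE.mp hp).2
    refine (one_sub_div_div_one_sub_pow_le hpp (hnm p)).trans ?_
    rw [largePrimeWeight]
    split_ifs with h1 h2 h2
    · lia
    · rw [Real.exp_zero, one_pow, mul_one]
      exact pow_le_pow_right₀ (hone hpp) (Nat.sub_le_sub_left (hn1 p) m)
    · rw [one_mul]
      have hp2 : (2 : ℝ) ≤ p := by exact_mod_cast hpp.two_le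
      have hinv : (1 - 1 / (p : ℝ))⁻¹ = 1 / ((p : ℝ) - 1) + 1 := by
        have : (p : ℝ) - 1 ≠ 0 := by linarith
        field_simp
        ring
      have := Real.add_one_le_exp (1 / ((p : ℝ) - 1))
      have h0 := hone hpp
      refine pow_le_pow_left₀ (by linarith) ?_ _
      rw [hinv]
      exact this
    · lia
  have hnonneg : ∀ p ∈ k.primesLE, 0 ≤ (1 - (n p : ℝ) / p) / (1 - 1 / (p : ℝ)) ^ m := by
    intro p hp
    have hpp := (Nat.mem_primesLE.mp hp).2
    have h1 : (n p : ℝ) / p ≤ 1 := by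
      rw [div_le_one (by exact_mod_cast hpp.pos)]
      exact_mod_cast hnp p hp
    have h2 : 0 ≤ 1 - 1 / (p : ℝ) := inv_nonneg.mp (zero_le_one.trans (hone hpp))
    exact div_nonneg (by linarith) (pow_nonneg h2 m)
  refine (Finset.prod_le_prod hnonneg hfac).trans ?_
  rw [Finset.prod_mul_distrib]
  refine mul_le_mul_of_nonneg_right ?_
    (Finset.prod_nonneg fun p _ => pow_nonneg (Real.exp_pos _).le _)
  rw [← Finset.prod_filter, Finset.prod_pow]
  have hsub : {p ∈ k.primesLE | p ≤ Y} ⊆ Y.primesLE := fun p hp => by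
    obtain ⟨h1, h2⟩ := Finset.mem_filter.mp hp
    exact Nat.mem_primesLE.mpr ⟨h2, (Nat.mem_primesLE.mp h1).2⟩
  have hnn : ∀ p ∈ {p ∈ k.primesLE | p ≤ Y}, 0 ≤ (1 - 1 / (p : ℝ))⁻¹ := fun p hp =>
    zero_le_one.trans (hone (Nat.mem_primesLE.mp (hsub hp)).2)
  refine pow_le_pow_left₀ (Finset.prod_nonneg hnn) ?_ _
  exact (Finset.prod_le_prod_of_subset_of_one_le hsub hnn
    fun p hp _ => hone (Nat.mem_primesLE.mp hp).2).trans (prod_primesLE_one_sub_inv_inv_le hY)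

theorem totient_prod_primes {S : Finset ℕ} (hS : ∀ p ∈ S, p.Prime) :
    ((∏ p ∈ S, p).totient : ℝ) = ∏ p ∈ S, ((p : ℝ) - 1) := by
  induction S using Finset.cons_induction with
  | empty => simp
  | cons q S hq ih =>
    have hqp := hS q (Finset.mem_cons_self q S)
    have hS' : ∀ p ∈ S, p.Prime := fun p hp => hS p (Finset.mem_cons_of_mem hp)
    have hcop : q.Coprime (∏ p ∈ S, p) := Nat.Coprime.prod_right fun p hp =>
      (Nat.coprime_primes hqp (hS' p hp)).mpr fun h => hq (h ▸ hp)
    rw [Finset.prod_cons, Finset.prod_cons, Nat.totient_mul hcop, Nat.cast_mul, ih hS',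
      Nat.totient_prime hqp, Nat.cast_pred hqp.pos]

theorem sum_largePrimeWeight_sq_le (k : ℕ) {Y : ℕ} (hY : 1 ≤ Y) :
    ∑ p ∈ k.primesLE, largePrimeWeight Y p ^ 2 ≤ 2 / Y := by
  have h1 := sum_Ioo_inv_sq_le (α := ℝ) (Y - 1) k
  rw [Nat.cast_pred hY, sub_add_cancel] at h1
  refine le_trans ?_ h1
  calc ∑ p ∈ k.primesLE, largePrimeWeight Y p ^ 2
      = ∑ p ∈ k.primesLE with Y < p, (((p - 1 : ℕ) : ℝ) ^ 2)⁻¹ := by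
        rw [Finset.sum_filter]
        refine Finset.sum_congr rfl fun p hp => ?_
        rw [largePrimeWeight]
        split_ifs with h
        · rw [Nat.cast_pred (by lia), one_div, inv_pow]
        · simp
    _ = ∑ i ∈ ({p ∈ k.primesLE | Y < p}.image fun p => p - 1 : Finset ℕ), ((i : ℝ) ^ 2)⁻¹ := by
        rw [Finset.sum_image]
        intro p hp q hq hpq
        have := (Finset.mem_filter.mp hp).2
        have := (Finset.mem_filter.mp hq).2
        lia
    _ ≤ _ := by
        refine Finset.sum_le_sum_of_subset_of_nonneg (fun i hi => ?_) fun i _ _ => by positivity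
        obtain ⟨p, hp, rfl⟩ := Finset.mem_image.mp hi
        obtain ⟨h2, h3⟩ := Finset.mem_filter.mp hp
        have := (Nat.mem_primesLE.mp h2).1
        exact Finset.mem_Ioo.mpr (by lia)

theorem largePrimeWeight_nonneg (Y p : ℕ) : 0 ≤ largePrimeWeight Y p := by
  rw [largePrimeWeight]
  split_ifs with h
  · have : (1 : ℝ) ≤ p := by exact_mod_cast (by lia : 1 ≤ p)
    exact one_div_nonneg.mpr (by linarith)
  · exact le_rfl

theorem prod_add_mul_exp_sub_one_pow_le {m k Y : ℕ} {L : ℝ} (hm : 1 ≤ m) (hmY : m ≤ Y)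
    (hL0 : 0 ≤ L) (hLY : L ≤ Y) :
    ∏ p ∈ k.primesLE, ((p - 1 : ℝ) + m * (Real.exp (L * largePrimeWeight Y p) - 1)) ^ m ≤
      ((∏ p ∈ k.primesLE, p).totient : ℝ) ^ m * Real.exp (4 * m * L) := by
  have hfac : ∀ p ∈ k.primesLE,
      ((p - 1 : ℝ) + m * (Real.exp (L * largePrimeWeight Y p) - 1)) ^ m ≤
        ((p : ℝ) - 1) ^ m * Real.exp (2 * m ^ 2 * L * largePrimeWeight Y p ^ 2) := by
    intro p hp
    have hpp := (Nat.mem_primesLE.mp hp).2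
    have hp1 : (0 : ℝ) < p - 1 := by
      have : (1 : ℝ) < p := by exact_mod_cast hpp.one_lt
      linarith
    by_cases hYp : Y < p
    · have hu : largePrimeWeight Y p = 1 / ((p : ℝ) - 1) := if_pos hYp
      have hLp : L ≤ p - 1 := by
        have : (Y : ℝ) + 1 ≤ p := by exact_mod_cast hYp
        linarith
      have hs0 : 0 ≤ L * (1 / ((p : ℝ) - 1)) := by positivity
      have hs : |L * (1 / ((p : ℝ) - 1))| ≤ 1 := by
        rw [abs_of_nonneg hs0, mul_one_div, div_le_one hp1]
        exact hLp
      have he := (le_abs_self _).trans (Real.abs_exp_sub_one_le hs)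
      rw [abs_of_nonneg hs0] at he
      rw [hu]
      have hexp : (1 : ℝ) ≤ Real.exp (L * (1 / ((p : ℝ) - 1))) := Real.one_le_exp hs0
      have hbase : (p - 1 : ℝ) + m * (Real.exp (L * (1 / ((p : ℝ) - 1))) - 1) ≤
          (p - 1) * Real.exp (2 * m * L * (1 / ((p : ℝ) - 1)) ^ 2) := by
        calc (p - 1 : ℝ) + m * (Real.exp (L * (1 / ((p : ℝ) - 1))) - 1)
            ≤ (p - 1) + m * (2 * (L * (1 / ((p : ℝ) - 1)))) := by gcongr
          _ = (p - 1) * (2 * m * L * (1 / ((p : ℝ) - 1)) ^ 2 + 1) := by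
              field_simp
              ring
          _ ≤ _ := by
              gcongr
              exact Real.add_one_le_exp _
      have h0 : 0 ≤ (p - 1 : ℝ) + m * (Real.exp (L * (1 / ((p : ℝ) - 1))) - 1) :=
        add_nonneg hp1.le (mul_nonneg (Nat.cast_nonneg m) (by linarith))
      refine (pow_le_pow_left₀ h0 hbase m).trans (le_of_eq ?_)
      rw [mul_pow, ← Real.exp_nat_mul]
      congr 2
      ring
    · have hu : largePrimeWeight Y p = 0 := if_neg hYp
      simp [hu]
  have hnonneg : ∀ p ∈ k.primesLE,
      0 ≤ ((p - 1 : ℝ) + m * (Real.exp (L * largePrimeWeight Y p) - 1)) ^ m := by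
    intro p hp
    have h1 : (1 : ℝ) ≤ p := by exact_mod_cast (Nat.mem_primesLE.mp hp).2.one_lt.le
    have h2 := Real.one_le_exp (mul_nonneg hL0 (largePrimeWeight_nonneg Y p))
    exact pow_nonneg
      (add_nonneg (by linarith) (mul_nonneg (Nat.cast_nonneg m) (by linarith))) m
  refine (Finset.prod_le_prod hnonneg hfac).trans ?_
  rw [Finset.prod_mul_distrib, Finset.prod_pow, ← Real.exp_sum, ← Finset.mul_sum,
    totient_prod_primes fun p hp => (Nat.mem_primesLE.mp hp).2]
  refine mul_le_mul_of_nonneg_left (Real.exp_le_exp.mpr ?_) (pow_nonneg (Finset.prod_nonneg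
    fun p hp => ?_) m)
  · have hm0 : (0 : ℝ) < m := by exact_mod_cast hm
    have hmY' : (m : ℝ) ≤ Y := by exact_mod_cast hmY
    calc 2 * (m : ℝ) ^ 2 * L * ∑ p ∈ k.primesLE, largePrimeWeight Y p ^ 2
        ≤ 2 * (m : ℝ) ^ 2 * L * (2 / m) := by
          gcongr
          exact (sum_largePrimeWeight_sq_le k (hm.trans hmY)).trans (by gcongr)
      _ = 4 * m * L := by
          field_simp
          ring
  · have h1 : (1 : ℝ) ≤ p := by exact_mod_cast (Nat.mem_primesLE.mp hp).2.one_lt.le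
    linarith

theorem one_div_twenty_le_log_log_three : 1 / 20 ≤ Real.log (Real.log 3) := by
  rw [Real.le_log_iff_exp_le (Real.log_pos (by norm_num))]
  have h := (le_abs_self _).trans (Real.abs_exp_sub_one_sub_id_le (x := 1 / 20) (by norm_num))
  have h3 := Real.log_three_gt_d9
  norm_num at h h3 ⊢
  linarith

/-- Every tuple counted in the main theorem has a large weighted number of coincidences modulo the
primes exceeding `m + ⌈log k⌉`. -/
theorem exp_lt_prod_of_threshold_lt {m k : ℕ} (hm : 1 ≤ m) (hk : 3 ≤ k) {n : ℕ → ℕ}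
    (hn1 : ∀ p, 1 ≤ n p) (hnm : ∀ p, n p ≤ m) (hnp : ∀ p ∈ k.primesLE, n p ≤ p)
    (h : (Real.log (3 * m)) ^ ((401 : ℝ) * m) * (Real.log (Real.log k)) ^ (m - 1) <
      ∏ p ∈ k.primesLE, (1 - (n p : ℝ) / p) / (1 - 1 / (p : ℝ)) ^ m) :
    Real.exp (9 * m) <
      ∏ p ∈ k.primesLE, Real.exp (largePrimeWeight (m + ⌈Real.log k⌉₊) p) ^ (m - n p) := by
  set Y := m + ⌈Real.log k⌉₊ with hY
  set E := ∏ p ∈ k.primesLE, Real.exp (largePrimeWeight Y p) ^ (m - n p) with hE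
  set a := Real.log (3 * m) with ha
  set b := Real.log (Real.log k) with hb
  have hE0 : 0 < E := Finset.prod_pos fun p _ => pow_pos (Real.exp_pos _) _
  have hm1 : (1 : ℝ) ≤ m := by exact_mod_cast hm
  have hk3 : (3 : ℝ) ≤ k := by exact_mod_cast hk
  have hlog3 := Real.log_three_gt_d9
  have hlogk : Real.log 3 ≤ Real.log k := Real.log_le_log (by norm_num) hk3
  have hL1 : 1 < Real.log k := by norm_num at hlog3; linarith
  have ha3 : Real.log 3 ≤ a := Real.log_le_log (by norm_num) (by linarith)
  have ha1 : 1 ≤ a := by norm_num at hlog3; linarith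
  have hb20 : 1 / 20 ≤ b :=
    one_div_twenty_le_log_log_three.trans (Real.log_le_log (by linarith) hlogk)
  have hla20 : 1 / 20 ≤ Real.log a :=
    one_div_twenty_le_log_log_three.trans (Real.log_le_log (by linarith) ha3)
  have hceil : 1 ≤ ⌈Real.log k⌉₊ := Nat.one_le_ceil_iff.mpr (by linarith)
  have hY2 : 2 ≤ Y := by lia
  have hYle : (Y : ℝ) ≤ 3 * m * Real.log k := by
    have := Nat.ceil_lt_add_one (zero_le_one.trans hL1.le)
    rw [hY, Nat.cast_add]
    nlinarith
  have hY0 : (0 : ℝ) < Y := by exact_mod_cast (by lia : 0 < Y)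
  have hlogY : Real.log Y ≤ 21 * (a * b) := by
    have h1 := Real.log_le_log hY0 hYle
    rw [Real.log_mul (by positivity) (by positivity)] at h1
    nlinarith
  have hlogY0 : 0 ≤ Real.log Y := Real.log_natCast_nonneg Y
  have hb0 : 0 < b := by linarith
  have h2 : a ^ ((401 : ℝ) * m) * b ^ (m - 1) < (63 * Real.exp 4 * a) ^ m * E * b ^ (m - 1) := by
    calc _ < _ := h
      _ ≤ _ := prod_primesLE_singular_le hY2 hn1 hnm hnp
      _ ≤ (3 * Real.exp 4 * (21 * (a * b))) ^ (m - 1) * E := by gcongr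
      _ = (63 * Real.exp 4 * a) ^ (m - 1) * E * b ^ (m - 1) := by
          rw [show 3 * Real.exp 4 * (21 * (a * b)) = (63 * Real.exp 4 * a) * b by ring, mul_pow]
          ring
      _ ≤ _ := by
          gcongr
          · have := Real.one_le_exp (x := 4) (by norm_num)
            nlinarith
          · lia
  have h3 := lt_of_mul_lt_mul_right h2 (by positivity)
  have h4 : (63 * Real.exp 4 * a) ^ m * Real.exp (9 * m) ≤ a ^ ((401 : ℝ) * m) := by
    rw [Real.rpow_mul_natCast (by linarith), mul_comm 9 (m : ℝ), Real.exp_nat_mul, ← mul_pow]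
    refine pow_le_pow_left₀ (by positivity) ?_ m
    have h63 : (63 : ℝ) ≤ Real.exp 7 := by
      have h2e : (2 : ℝ) ≤ Real.exp 1 := by linarith [Real.add_one_le_exp 1]
      calc (63 : ℝ) ≤ 2 ^ 7 := by norm_num
        _ ≤ Real.exp 1 ^ 7 := by gcongr
        _ = Real.exp 7 := by rw [← Real.exp_nat_mul]; norm_num
    calc 63 * Real.exp 4 * a * Real.exp 9 ≤ Real.exp 7 * Real.exp 4 * a * Real.exp 9 := by gcongr
      _ = Real.exp (1 / 20 * 400) * a := by
          rw [show (1 / 20 * 400 : ℝ) = 7 + 4 + 9 by norm_num, Real.exp_add, Real.exp_add]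
          ring
      _ ≤ Real.exp (Real.log a * 400) * a := by gcongr
      _ = a ^ (401 : ℝ) := by
          rw [← Real.rpow_def_of_pos (by linarith),
            show (401 : ℝ) = 400 + 1 by norm_num, Real.rpow_add_one (by linarith)]
  have h5 := h4.trans_lt h3
  exact lt_of_mul_lt_mul_left h5 (by positivity)

theorem thirtyTwo_mul_mul_choose_le {m k : ℕ} (hm : 1 ≤ m) (hmk : m ≤ k) (hk : 3 ≤ k) :
    (32 * m * Nat.choose (k - 1) (m - 1) : ℝ) ≤ Real.exp (5 * m * Real.log k) := by
  have h1 : 32 * m * Nat.choose (k - 1) (m - 1) ≤ k ^ (m * 5) := by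
    calc 32 * m * Nat.choose (k - 1) (m - 1) ≤ k ^ 4 * k * k ^ (m - 1) := by
          gcongr
          · exact (by norm_num : 32 ≤ 3 ^ 4).trans (Nat.pow_le_pow_left hk 4)
          · exact (Nat.choose_le_pow _ _).trans (Nat.pow_le_pow_left (by lia) _)
      _ = k ^ (m + 4) := by
          rw [← pow_succ, ← pow_add]
          congr 1
          lia
      _ ≤ k ^ (m * 5) := Nat.pow_le_pow_right (by lia) (by lia)
  have hk0 : (0 : ℝ) < k := by exact_mod_cast (by lia : 0 < k)
  calc (32 * m * Nat.choose (k - 1) (m - 1) : ℝ) ≤ (k : ℝ) ^ (m * 5) := by exact_mod_cast h1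
    _ = _ := by
        rw [← Real.rpow_natCast, Real.rpow_def_of_pos hk0]
        congr 1
        push_cast
        ring

theorem add_two_pow_le_two_mul_sub_two_pow {m : ℕ} {q : ℝ} (hq : 8 * m + 3 ≤ q) :
    (q + 2) ^ m ≤ 2 * (q - 2) ^ m := by
  have hm0 : (0 : ℝ) ≤ m := Nat.cast_nonneg m
  have hq0 : 0 < q - 2 := by linarith
  have h1 : q + 2 ≤ (q - 2) * Real.exp (4 / (q - 2)) := by
    calc q + 2 = (q - 2) * (4 / (q - 2) + 1) := by
          field_simp
          ring
      _ ≤ _ := by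
          gcongr
          exact Real.add_one_le_exp _
  have h2 : Real.exp (m * (4 / (q - 2))) ≤ 2 := by
    rw [← Real.le_log_iff_exp_le (by norm_num)]
    have h3 : m * (4 / (q - 2)) ≤ 1 / 2 := by
      rw [mul_div_assoc', div_le_div_iff₀ hq0 (by norm_num)]
      linarith
    linarith [Real.log_two_gt_d9]
  calc (q + 2) ^ m ≤ ((q - 2) * Real.exp (4 / (q - 2))) ^ m :=
        pow_le_pow_left₀ (by linarith) h1 m
    _ = Real.exp (m * (4 / (q - 2))) * (q - 2) ^ m := by
        rw [mul_pow, Real.exp_nat_mul]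
        ring
    _ ≤ _ := by gcongr

theorem mem_Nset_iff {k : ℕ} {x : ℝ} {n : ℤ} :
    n ∈ Nset k x ↔ n ∈ coprimeIoc ⌊-x⌋ ⌊x⌋ (∏ p ∈ k.primesLE, p) := by
  rw [coprimeIoc, Finset.mem_filter, Finset.mem_Ioc, Int.floor_lt, Int.le_floor, and_assoc]
  rfl

theorem residCount_pos {m : ℕ} (hm : 1 ≤ m) (p : ℕ) (h : Fin m → ℤ) : 1 ≤ residCount p h :=
  Finset.card_pos.mpr ⟨_, Finset.mem_image_of_mem _ (Finset.mem_univ ⟨0, hm⟩)⟩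

theorem residCount_le {m : ℕ} (p : ℕ) (h : Fin m → ℤ) : residCount p h ≤ m := by
  simpa [residCount] using Finset.card_image_le (s := (Finset.univ : Finset (Fin m)))
    (f := fun i => (h i : ZMod p))

theorem residCount_le_modulus {m : ℕ} {p : ℕ} (hp : p ≠ 0) (h : Fin m → ℤ) :
    residCount p h ≤ p := by
  have : NeZero p := ⟨hp⟩
  simpa [residCount, ZMod.card] using
    Finset.card_le_univ (Finset.univ.image fun i => (h i : ZMod p))

/-- Markov's inequality for the weighted number of coincidences. -/
theorem card_filter_threshold_le {m k : ℕ} (hm : 1 ≤ m) (hk : 3 ≤ k) {a b : ℤ} (hab : a ≤ b)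
    (B : Finset (Fin m → ℤ))
    (hB : B ⊆ Fintype.piFinset fun _ => coprimeIoc a b (∏ p ∈ k.primesLE, p))
    (hlarge : ∀ h ∈ B, (Real.log (3 * m)) ^ ((401 : ℝ) * m) * (Real.log (Real.log k)) ^ (m - 1) <
      ∏ p ∈ k.primesLE, (1 - (residCount p h : ℝ) / p) / (1 - 1 / (p : ℝ)) ^ m) :
    (B.card : ℝ) ≤ ((b - a : ℝ) / (∏ p ∈ k.primesLE, p : ℕ) + 1) ^ m *
      ((∏ p ∈ k.primesLE, p).totient : ℝ) ^ m * Real.exp (-(5 * m * Real.log k)) := by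
  set L := Real.log k with hL
  set Y := m + ⌈L⌉₊ with hY
  set P := ∏ p ∈ k.primesLE, p with hP
  have hk1 : (1 : ℝ) < k := by exact_mod_cast (by lia : 1 < k)
  have hL0 : 0 < L := Real.log_pos hk1
  have hLY : L ≤ Y := by
    rw [hY, Nat.cast_add]
    linarith [Nat.le_ceil L, Nat.cast_nonneg (α := ℝ) m]
  have hone : ∀ h ∈ B, 1 ≤ Real.exp (-(9 * m * L)) *
      ∏ p ∈ k.primesLE, Real.exp (L * largePrimeWeight Y p) ^ (m - residCount p h) := by
    intro h hh
    have h1 := exp_lt_prod_of_threshold_lt hm hk (n := fun p => residCount p h)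
      (fun p => residCount_pos hm p h) (fun p => residCount_le p h)
      (fun p hp => residCount_le_modulus (Nat.mem_primesLE.mp hp).2.ne_zero h) (hlarge h hh)
    simp only [← Real.exp_nat_mul, ← Real.exp_sum] at h1 ⊢
    rw [Real.exp_lt_exp] at h1
    rw [← Real.exp_add]
    refine Real.one_le_exp ?_
    have h2 : ∑ p ∈ k.primesLE, ((m - residCount p h : ℕ) : ℝ) * (L * largePrimeWeight Y p) =
        L * ∑ p ∈ k.primesLE, ((m - residCount p h : ℕ) : ℝ) * largePrimeWeight Y p := by
      rw [Finset.mul_sum]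
      exact Finset.sum_congr rfl fun p _ => by ring
    rw [h2]
    nlinarith
  have hQ0 : 0 ≤ (b - a : ℝ) / (P : ℕ) + 1 := by
    have : (a : ℝ) ≤ b := by exact_mod_cast hab
    have : (0 : ℝ) ≤ b - a := by linarith
    positivity
  calc (B.card : ℝ) = ∑ _h ∈ B, (1 : ℝ) := by simp
    _ ≤ ∑ h ∈ B, Real.exp (-(9 * m * L)) *
        ∏ p ∈ k.primesLE, Real.exp (L * largePrimeWeight Y p) ^ (m - residCount p h) :=
        Finset.sum_le_sum hone
    _ ≤ ∑ h ∈ Fintype.piFinset (fun _ : Fin m => coprimeIoc a b P), Real.exp (-(9 * m * L)) *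
        ∏ p ∈ k.primesLE, Real.exp (L * largePrimeWeight Y p) ^ (m - residCount p h) :=
        Finset.sum_le_sum_of_subset_of_nonneg hB fun h _ _ => mul_nonneg (Real.exp_pos _).le
          (Finset.prod_nonneg fun p _ => pow_nonneg (Real.exp_pos _).le _)
    _ ≤ Real.exp (-(9 * m * L)) * (((b - a : ℝ) / (P : ℕ) + 1) ^ m *
        ((P.totient : ℝ) ^ m * Real.exp (4 * m * L))) := by
        rw [← Finset.mul_sum]
        refine mul_le_mul_of_nonneg_left ?_ (Real.exp_pos _).le
        refine (sum_prod_pow_sub_residCount_le hab (fun p hp => (Nat.mem_primesLE.mp hp).2) m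
          (w := fun p => Real.exp (L * largePrimeWeight Y p)) fun p =>
            Real.one_le_exp (mul_nonneg hL0.le (largePrimeWeight_nonneg Y p))).trans ?_
        exact mul_le_mul_of_nonneg_left
          (prod_add_mul_exp_sub_one_pow_le hm (by lia) hL0.le hLY) (pow_nonneg hQ0 m)
    _ = _ := by
        rw [show -(5 * m * L) = -(9 * m * L) + 4 * m * L by ring, Real.exp_add]
        ring

theorem stmt_15 : ∃ c : ℝ, 0 < c ∧ ∀ m k : ℕ, 1 ≤ m → m ≤ k → 3 ≤ k →
    ∃ x₀ : ℝ, ∀ x : ℝ, x₀ ≤ x →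
      (Nat.card {h : Fin m → ℤ // (∀ i, h i ∈ Nset k x) ∧
          (Real.log (3 * m)) ^ (c * m) * (Real.log (Real.log k)) ^ (m - 1) <
            ∏ p ∈ Finset.filter Nat.Prime (Finset.range (k + 1)),
              (1 - (residCount p h : ℝ) / p) / (1 - 1 / (p : ℝ)) ^ m} : ℝ) ≤
        (Nat.card (Nset k x) : ℝ) ^ m / (16 * m * Nat.choose (k - 1) (m - 1)) := by
  classical
  refine ⟨401, by norm_num, fun m k hm hmk hk => ?_⟩
  change ∃ x₀ : ℝ, ∀ x : ℝ, x₀ ≤ x →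
      (Nat.card {h : Fin m → ℤ // (∀ i, h i ∈ Nset k x) ∧
          (Real.log (3 * m)) ^ ((401 : ℝ) * m) * (Real.log (Real.log k)) ^ (m - 1) <
            ∏ p ∈ k.primesLE, (1 - (residCount p h : ℝ) / p) / (1 - 1 / (p : ℝ)) ^ m} : ℝ) ≤
        (Nat.card (Nset k x) : ℝ) ^ m / (16 * m * Nat.choose (k - 1) (m - 1))
  set P := ∏ p ∈ k.primesLE, p with hP
  have hP0 : 0 < P := Finset.prod_pos fun p hp => (Nat.mem_primesLE.mp hp).2.pos
  have hP1 : (1 : ℝ) ≤ P := by exact_mod_cast hP0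
  refine ⟨P * (8 * m + 3), fun x hx => ?_⟩
  have hx0 : 0 ≤ x := le_trans (by positivity) hx
  set A := coprimeIoc ⌊-x⌋ ⌊x⌋ P with hA
  set B := {h ∈ Fintype.piFinset fun _ : Fin m => A |
    (Real.log (3 * m)) ^ ((401 : ℝ) * m) * (Real.log (Real.log k)) ^ (m - 1) <
      ∏ p ∈ k.primesLE, (1 - (residCount p h : ℝ) / p) / (1 - 1 / (p : ℝ)) ^ m} with hB
  have hcardB : Nat.card {h : Fin m → ℤ // (∀ i, h i ∈ Nset k x) ∧
      (Real.log (3 * m)) ^ ((401 : ℝ) * m) * (Real.log (Real.log k)) ^ (m - 1) <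
        ∏ p ∈ k.primesLE, (1 - (residCount p h : ℝ) / p) / (1 - 1 / (p : ℝ)) ^ m} = B.card := by
    refine Nat.subtype_card B fun h => ?_
    simp only [hB, hA, Finset.mem_filter, Fintype.mem_piFinset, mem_Nset_iff, hP]
  have hcardA : Nat.card (Nset k x) = A.card :=
    Nat.subtype_card A fun n => mem_Nset_iff.symm
  rw [hcardB, hcardA]
  have hab : ⌊-x⌋ ≤ ⌊x⌋ := Int.floor_le_floor (by linarith)
  have hcount := card_filter_threshold_le hm hk hab B (Finset.filter_subset _ _)
    fun h hh => (Finset.mem_filter.mp hh).2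
  have hlower := totient_mul_le_card_coprimeIoc hab hP0
  rw [← hP] at hcount
  set q : ℝ := 2 * x / P with hq
  have hq8 : 8 * m + 3 ≤ q := by
    rw [hq, le_div_iff₀ (by linarith)]
    linarith
  have hm0 : (0 : ℝ) ≤ m := Nat.cast_nonneg m
  have hinvP : 1 / (P : ℝ) ≤ 1 := (div_le_one (by linarith)).mpr hP1
  have hu : ((⌊x⌋ : ℝ) - ⌊-x⌋) / P ≤ q + 1 := by
    calc ((⌊x⌋ : ℝ) - ⌊-x⌋) / P ≤ (2 * x + 1) / P := by
          gcongr
          linarith [Int.floor_le x, Int.lt_floor_add_one (-x)]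
      _ = q + 1 / P := by rw [hq]; ring
      _ ≤ q + 1 := by linarith
  have hl : q - 1 ≤ ((⌊x⌋ : ℝ) - ⌊-x⌋) / P := by
    calc q - 1 ≤ q - 1 / P := by linarith
      _ = (2 * x - 1) / P := by rw [hq]; ring
      _ ≤ _ := by
          refine div_le_div_of_nonneg_right ?_ (by linarith)
          linarith [Int.floor_le (-x), Int.lt_floor_add_one x]
  have hA' : (P.totient : ℝ) * (q - 2) ≤ A.card := by
    refine le_trans (mul_le_mul_of_nonneg_left ?_ (Nat.cast_nonneg _)) hlower
    linarith
  have hchoose : 0 < Nat.choose (k - 1) (m - 1) := Nat.choose_pos (by lia)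
  have hD : (0 : ℝ) < 16 * m * Nat.choose (k - 1) (m - 1) := by
    have : (0 : ℝ) < m := by exact_mod_cast hm
    positivity
  have hDexp := thirtyTwo_mul_mul_choose_le hm hmk hk
  rw [le_div_iff₀ hD]
  calc (B.card : ℝ) * (16 * m * Nat.choose (k - 1) (m - 1))
      ≤ ((q + 2) ^ m * (P.totient : ℝ) ^ m * Real.exp (-(5 * m * Real.log k))) *
        (Real.exp (5 * m * Real.log k) / 2) := by
        refine mul_le_mul (hcount.trans ?_) (by linarith) hD.le (by positivity)
        have h1 : 0 ≤ ((⌊x⌋ : ℝ) - ⌊-x⌋) / P + 1 := by linarith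
        have h2 : ((⌊x⌋ : ℝ) - ⌊-x⌋) / P + 1 ≤ q + 2 := by linarith
        gcongr
    _ = (q + 2) ^ m / 2 * (P.totient : ℝ) ^ m := by
        rw [Real.exp_neg]
        field_simp
    _ ≤ (q - 2) ^ m * (P.totient : ℝ) ^ m := by
        gcongr
        linarith [add_two_pow_le_two_mul_sub_two_pow hq8]
    _ = ((P.totient : ℝ) * (q - 2)) ^ m := by rw [mul_pow, mul_comm]
    _ ≤ (A.card : ℝ) ^ m :=
        pow_le_pow_left₀ (mul_nonneg (Nat.cast_nonneg _) (by linarith)) hA' m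
end

section
/- For every integer m ≥ 1, the limit ρ_ad(m) = lim_{N→∞} #{(h_1,…,h_m) ∈ {1,…,N}^m : (h_1,…,h_m) is admissible} / N^m exists, and there is an absolute constant C > 0 such that for all m ≥ 3: e^{−C m log log m / log m} ≤ ρ_ad(m) · (e^γ log m)^m ≤ e^{C m log log m / log m}, where γ is the Euler–Mascheroni constant. -/
open Filter

/-- A `k`-tuple of integers is admissible if for every prime `p` its entries
do not cover all residue classes mod `p`. -/
def AdmissibleTuple {k : ℕ} (x : Fin k → ℤ) : Prop :=
  ∀ p : ℕ, p.Prime → ∃ r : ZMod p, ∀ i, (x i : ZMod p) ≠ r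

/-- The number of admissible `m`-tuples with entries in `{1, …, N}`. -/
noncomputable def admCount (m N : ℕ) : ℕ :=
  Nat.card {h : Fin m → ℤ // (∀ i, 1 ≤ h i ∧ h i ≤ (N : ℤ)) ∧ AdmissibleTuple h}

open Real Finset in
theorem log_factorial_eq_sum_primesLE (n : ℕ) :
    log (n.factorial : ℝ) = ∑ p ∈ n.primesLE, (n.factorial.factorization p : ℝ) * log p := by
  rw [Real.log_nat_eq_sum_factorization]
  refine Finsupp.sum_of_support_subset _ (fun p hp => ?_) _ (by simp)
  rw [Nat.support_factorization, Nat.mem_primeFactors] at hp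
  exact Nat.mem_primesLE.2 ⟨hp.1.dvd_factorial.1 hp.2.1, hp.1⟩

theorem div_sub_one_le_factorization_factorial {p : ℕ} (hp : p.Prime) (n : ℕ) :
    (n : ℝ) / p - 1 ≤ n.factorial.factorization p := by
  have h2 : n / p ≤ n.factorial.factorization p := by
    rw [Nat.factorization_factorial hp (lt_add_of_pos_right (Nat.log p n) two_pos)]
    have := Finset.single_le_sum (f := fun i => n / p ^ i) (fun _ _ => Nat.zero_le _)
      (Finset.mem_Ico.2 ⟨le_rfl, by omega⟩ : 1 ∈ Finset.Ico 1 (Nat.log p n + 2))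
    simpa using this
  have h3 : (n : ℝ) / p < (n / p : ℕ) + 1 := by
    rw [← Nat.floor_div_eq_div (K := ℝ)]; exact Nat.lt_floor_add_one _
  have h4 : ((n / p : ℕ) : ℝ) ≤ n.factorial.factorization p := by exact_mod_cast h2
  linarith

theorem factorization_factorial_le_div_sub_one {p : ℕ} (hp : p.Prime) (n : ℕ) :
    (n.factorial.factorization p : ℝ) ≤ n / ((p : ℝ) - 1) := by
  have := Fact.mk hp
  have h1 := sub_one_mul_padicValNat_factorial (p := p) n
  have h2 : (p - 1) * n.factorial.factorization p ≤ n := by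
    rw [Nat.factorization_def _ hp, h1]; omega
  have hp1 : (1 : ℝ) < p := by exact_mod_cast hp.one_lt
  rw [le_div_iff₀ (by linarith), mul_comm]
  have : (((p - 1) * n.factorial.factorization p : ℕ) : ℝ) ≤ n := by exact_mod_cast h2
  rwa [Nat.cast_mul, Nat.cast_sub hp.one_lt.le, Nat.cast_one] at this

theorem summable_log_div_mul_sub_one :
    Summable (fun k : ℕ => Real.log k / (k * ((k : ℝ) - 1))) := by
  refine Summable.of_nonneg_of_le (fun k => ?_) (fun k => ?_)
    ((Real.summable_nat_rpow_inv.2 (by norm_num : (1 : ℝ) < 3 / 2)).mul_left 4)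
  · rcases Nat.lt_or_ge k 2 with hk | hk
    · interval_cases k <;> simp
    · have : (2 : ℝ) ≤ k := by exact_mod_cast hk
      have := Real.log_natCast_nonneg k
      apply div_nonneg this
      apply mul_nonneg <;> linarith
  · rcases Nat.lt_or_ge k 2 with hk | hk
    · interval_cases k <;> simp
    · have hk2 : (2 : ℝ) ≤ k := by exact_mod_cast hk
      have h1 := Real.log_natCast_le_rpow_div k (by norm_num : (0 : ℝ) < 1 / 2)
      have hk0 : (0 : ℝ) < k := by linarith
      have h2 : (k : ℝ) ^ (3 / 2 : ℝ) * (k : ℝ) ^ (1 / 2 : ℝ) = k * k := by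
        rw [← Real.rpow_add hk0]; norm_num; ring
      have h3 : 0 < (k : ℝ) ^ (3 / 2 : ℝ) := by positivity
      rw [div_le_iff₀ (by nlinarith), ← div_eq_mul_inv, div_mul_eq_mul_div, le_div_iff₀ h3]
      have h4 : Real.log k * (k : ℝ) ^ (3 / 2 : ℝ) ≤ 2 * (k * k) := by
        rw [← h2]
        nlinarith
      nlinarith

/-- **Mertens' first theorem.** -/
theorem exists_abs_sum_log_div_sub_log_le :
    ∃ K : ℝ, ∀ n : ℕ, 1 ≤ n →
      |∑ p ∈ n.primesLE, Real.log p / p - Real.log n| ≤ K := by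
  set B := ∑' k : ℕ, Real.log k / (k * ((k : ℝ) - 1)) with hB
  refine ⟨Real.log 4 + 1 + B, fun n hn => ?_⟩
  have hn0 : (0 : ℝ) < n := by exact_mod_cast hn
  have hfac := log_factorial_eq_sum_primesLE n
  have hnonneg : ∀ k : ℕ, 0 ≤ Real.log k / (k * ((k : ℝ) - 1)) := fun k => by
    rcases Nat.eq_zero_or_pos k with rfl | hk
    · simp
    · have : (1 : ℝ) ≤ k := by exact_mod_cast hk
      exact div_nonneg (Real.log_natCast_nonneg k) (mul_nonneg (by linarith) (by linarith))
  have hB0 : 0 ≤ B := tsum_nonneg hnonneg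
  have hlog4 : 0 ≤ Real.log 4 := Real.log_nonneg (by norm_num)
  have hupper : Real.log n.factorial ≤ n * Real.log n := by
    rw [← Real.log_pow]
    apply Real.log_le_log (by exact_mod_cast n.factorial_pos)
    exact_mod_cast Nat.factorial_le_pow n
  have hlower : n * Real.log n - n ≤ Real.log n.factorial := by
    have h := Real.pow_div_factorial_le_exp (n : ℝ) hn0.le n
    have hf : (0 : ℝ) < n.factorial := by exact_mod_cast n.factorial_pos
    have h' := Real.log_le_log (by positivity) h
    rw [Real.log_exp, Real.log_div (by positivity) hf.ne', Real.log_pow] at h'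
    linarith
  have h1 : n * ∑ p ∈ n.primesLE, Real.log p / p - Chebyshev.theta n ≤ Real.log n.factorial := by
    rw [hfac, Chebyshev.theta_eq_sum_primesLE_log, Finset.mul_sum, ← Finset.sum_sub_distrib]
    refine Finset.sum_le_sum fun p hp => ?_
    have hp' := Nat.prime_of_mem_primesLE hp
    have := mul_le_mul_of_nonneg_right (div_sub_one_le_factorization_factorial hp' n)
      (Real.log_natCast_nonneg p)
    calc _ = ((n : ℝ) / p - 1) * Real.log p := by ring
      _ ≤ _ := this
  have h2 : Real.log n.factorial ≤ n * (∑ p ∈ n.primesLE, Real.log p / p + B) := by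
    have hb : ∑ p ∈ n.primesLE, Real.log p / (p * ((p : ℝ) - 1)) ≤ B :=
      summable_log_div_mul_sub_one.sum_le_tsum _ fun k _ => hnonneg k
    calc _ = _ := hfac
      _ ≤ ∑ p ∈ n.primesLE, n * (Real.log p / p + Real.log p / (p * ((p : ℝ) - 1))) := by
        refine Finset.sum_le_sum fun p hp => ?_
        have hp' := Nat.prime_of_mem_primesLE hp
        have hp1 : (1 : ℝ) < p := by exact_mod_cast hp'.one_lt
        have := mul_le_mul_of_nonneg_right (factorization_factorial_le_div_sub_one hp' n)
          (Real.log_natCast_nonneg p)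
        refine this.trans_eq ?_
        have : (p : ℝ) - 1 ≠ 0 := by linarith
        field_simp
        ring
      _ = n * (∑ p ∈ n.primesLE, Real.log p / p
            + ∑ p ∈ n.primesLE, Real.log p / (p * ((p : ℝ) - 1))) := by
        rw [← Finset.mul_sum, Finset.sum_add_distrib]
      _ ≤ _ := by gcongr
  have hθ := Chebyshev.theta_le_log4_mul_x hn0.le
  rw [abs_le]
  constructor
  · have : n * (Real.log n - 1) ≤ n * (∑ p ∈ n.primesLE, Real.log p / p + B) := by linarith
    have := le_of_mul_le_mul_left this hn0
    linarith
  · have : n * ∑ p ∈ n.primesLE, Real.log p / p ≤ n * (Real.log n + Real.log 4) := by linarith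
    have := le_of_mul_le_mul_left this hn0
    linarith

theorem abs_sub_div_sub_log_sub_log_le {a b : ℝ} (ha : 0 < a) (hab : a ≤ b) (hb : b ≤ a + 1) :
    |(b - a) / b - (Real.log b - Real.log a)| ≤ 1 / a - 1 / b := by
  have hb0 : 0 < b := by linarith
  have h1 : Real.log b - Real.log a ≤ (b - a) / a := by
    rw [← Real.log_div hb0.ne' ha.ne']
    refine (Real.log_le_sub_one_of_pos (by positivity)).trans_eq ?_
    field_simp
  have h2 : (b - a) / b ≤ Real.log b - Real.log a := by
    rw [← Real.log_div hb0.ne' ha.ne']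
    have := Real.one_sub_inv_le_log_of_pos (show 0 < b / a by positivity)
    refine le_trans (le_of_eq ?_) this
    field_simp
  have h3 : (b - a) / a - (b - a) / b ≤ 1 / a - 1 / b := by
    have : 1 / b ≤ 1 / a := one_div_le_one_div_of_le ha hab
    have h4 : (b - a) / a - (b - a) / b = (b - a) * (1 / a - 1 / b) := by ring
    rw [h4]; nlinarith
  rw [abs_le]; constructor <;> linarith

theorem exists_tendsto_and_abs_sub_le_of_abs_sub_succ_le {u v : ℕ → ℝ} {n₀ : ℕ}
    (hv : Tendsto v atTop (nhds 0)) (h : ∀ n, n₀ ≤ n → |u (n + 1) - u n| ≤ v n - v (n + 1)) :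
    ∃ M, Tendsto u atTop (nhds M) ∧ ∀ n, n₀ ≤ n → |u n - M| ≤ v n := by
  have hmn : ∀ m n, n₀ ≤ m → m ≤ n → |u n - u m| ≤ v m - v n := by
    intro m n hm hn
    induction n, hn using Nat.le_induction with
    | base => simp
    | succ k hk ih =>
      have h1 := h k (hm.trans hk)
      have h2 := abs_add_le (u (k + 1) - u k) (u k - u m)
      rw [sub_add_sub_cancel] at h2
      linarith
  have hcau : CauchySeq (fun k => u (k + n₀)) := by
    have hlim : Tendsto (fun k => v (k + n₀)) atTop (nhds 0) :=
      hv.comp (tendsto_add_atTop_nat n₀)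
    have hpos : ∀ k, n₀ ≤ k → 0 ≤ v k := fun k hk => by
      refine ge_of_tendsto' (x := atTop) (f := fun j => v k - v (j + k)) ?_ fun j => ?_
      · simpa using (hv.comp (tendsto_add_atTop_nat k)).const_sub (v k)
      · exact (abs_nonneg _).trans (hmn k (j + k) hk (by omega))
    refine cauchySeq_of_le_tendsto_0' (fun k => v (k + n₀)) (fun k j hkj => ?_) hlim
    rw [Real.dist_eq, abs_sub_comm]
    have := hmn (k + n₀) (j + n₀) (by omega) (by omega)
    have := hpos (j + n₀) (by omega)
    linarith
  obtain ⟨M, hM⟩ := cauchySeq_tendsto_of_complete hcau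
  have hM' : Tendsto u atTop (nhds M) := (tendsto_add_atTop_iff_nat n₀).1 hM
  refine ⟨M, hM', fun n hn => ?_⟩
  have h1 : Tendsto (fun k => |u k - u n|) atTop (nhds |M - u n|) := (hM'.sub_const _).abs
  have h2 : Tendsto (fun k => v n - v k) atTop (nhds (v n - 0)) := hv.const_sub _
  rw [abs_sub_comm, ← sub_zero (v n)]
  exact le_of_tendsto_of_tendsto h1 h2 (eventually_atTop.2 ⟨n, fun k hk => hmn n k hn hk⟩)

theorem sum_primesLE_succ (f : ℕ → ℝ) (n : ℕ) :
    ∑ p ∈ (n + 1).primesLE, f p =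
      ∑ p ∈ n.primesLE, f p + if (n + 1).Prime then f (n + 1) else 0 := by
  simp only [Nat.primesLE_eq_filter_range, Finset.sum_filter]
  rw [Finset.sum_range_succ]

/-- **Mertens' second theorem.** -/
theorem exists_abs_sum_inv_sub_log_log_sub_le :
    ∃ M K : ℝ, ∀ n : ℕ, 2 ≤ n →
      |∑ p ∈ n.primesLE, (1 : ℝ) / p - Real.log (Real.log n) - M| ≤ K / Real.log n := by
  obtain ⟨K, hK⟩ := exists_abs_sum_log_div_sub_log_le
  set R : ℕ → ℝ := fun n => ∑ p ∈ n.primesLE, Real.log p / p - Real.log n with hR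
  set Q : ℕ → ℝ := fun n => ∑ p ∈ n.primesLE, (1 : ℝ) / p - Real.log (Real.log n) with hQ
  have hK0 : 0 ≤ K := (abs_nonneg _).trans (hK 1 le_rfl)
  have hlog : Tendsto (fun n : ℕ => Real.log n) atTop atTop :=
    Real.tendsto_log_atTop.comp tendsto_natCast_atTop_atTop
  have hv : Tendsto (fun n : ℕ => (K + 1) / Real.log n) atTop (nhds 0) :=
    hlog.const_div_atTop _
  obtain ⟨M, -, hM⟩ := exists_tendsto_and_abs_sub_le_of_abs_sub_succ_le (n₀ := 2)
    (u := fun n => Q n - R n / Real.log n) hv (by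
      intro n hn
      have hn2 : (2 : ℝ) ≤ n := by exact_mod_cast hn
      set a := Real.log n with ha
      set b := Real.log ((n + 1 : ℕ) : ℝ) with hb
      have ha0 : 0 < a := Real.log_pos (by linarith)
      have hab : a ≤ b := Real.log_le_log (by linarith) (by push_cast; linarith)
      have hba : b ≤ a + 1 := by
        have : b - a = Real.log (((n + 1 : ℕ) : ℝ) / n) := by
          rw [Real.log_div (by positivity) (by positivity)]
        have h2 := Real.log_le_sub_one_of_pos
          (show (0 : ℝ) < ((n + 1 : ℕ) : ℝ) / n by positivity)
        have h3 : ((n + 1 : ℕ) : ℝ) / n - 1 ≤ 1 := by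
          rw [sub_le_iff_le_add, div_le_iff₀ (by linarith)]; push_cast; linarith
        linarith
      have hb0 : 0 < b := by linarith
      have hkey := abs_sub_div_sub_log_sub_log_le ha0 hab hba
      have hRn := hK n (by omega)
      have hdiff : 0 ≤ 1 / a - 1 / b := sub_nonneg.2 (one_div_le_one_div_of_le ha0 hab)
      have hstep : Q (n + 1) - R (n + 1) / b - (Q n - R n / a) =
          R n * (1 / a - 1 / b) + ((b - a) / b - (Real.log b - Real.log a)) := by
        simp only [hQ, hR]
        rw [sum_primesLE_succ, sum_primesLE_succ]
        rw [← ha, ← hb]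
        split_ifs with hp
        · field_simp
          ring
        · field_simp
          ring
      rw [hstep]
      calc _ ≤ |R n| * (1 / a - 1 / b) + (1 / a - 1 / b) := by
            refine (abs_add_le _ _).trans ?_
            rw [abs_mul, abs_of_nonneg hdiff]
            gcongr
        _ ≤ K * (1 / a - 1 / b) + (1 / a - 1 / b) := by gcongr
        _ = (K + 1) / a - (K + 1) / b := by ring)
  refine ⟨M, 2 * K + 1, fun n hn => ?_⟩
  have hn2 : (2 : ℝ) ≤ n := by exact_mod_cast hn
  have ha0 : 0 < Real.log n := Real.log_pos (by linarith)
  have h1 := hM n hn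
  have h2 := hK n (by omega)
  have h3 : |R n / Real.log n| ≤ K / Real.log n := by
    rw [abs_div, abs_of_pos ha0]; gcongr
  have h4 := abs_add_le (Q n - R n / Real.log n - M) (R n / Real.log n)
  rw [show Q n - R n / Real.log n - M + R n / Real.log n = Q n - M by ring] at h4
  calc |Q n - M| ≤ (K + 1) / Real.log n + K / Real.log n := by linarith
    _ = _ := by ring

open MeasureTheory in
theorem hasSum_mul_exp_neg_mul_integral {a l : ℕ → ℝ} (ha : ∀ i, 0 ≤ a i) (hl : ∀ i, 0 ≤ l i)
    {d : ℝ} (hd : 0 < d) (hs : Summable fun i => a i * Real.exp (-(d * l i))) :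
    HasSum (fun i => a i * Real.exp (-(d * l i)))
      (∫ v in Set.Ioi (0 : ℝ), Real.exp (-v) * ∑' i, if l i ≤ v / d then a i else 0) := by
  set F : ℕ → ℝ → ℝ := fun i => (Set.Ici (d * l i)).indicator fun v => a i * Real.exp (-v) with hF
  have hFnn : ∀ i v, 0 ≤ F i v := fun i v =>
    Set.indicator_nonneg (fun v _ => mul_nonneg (ha i) (Real.exp_pos _).le) v
  have hintegral : ∀ i, ∫ v in Set.Ioi (0 : ℝ), F i v = a i * Real.exp (-(d * l i)) := by
    intro i
    have h0 : 0 ≤ d * l i := mul_nonneg hd.le (hl i)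
    rw [← integral_Ici_eq_integral_Ioi, hF, setIntegral_indicator measurableSet_Ici,
      Set.inter_eq_right.2 (Set.Ici_subset_Ici.2 h0), integral_Ici_eq_integral_Ioi,
      integral_const_mul, integral_exp_neg_Ioi]
  have hFint : ∀ i, Integrable (F i) (volume.restrict (Set.Ioi (0 : ℝ))) := fun i =>
    ((integrableOn_exp_neg_Ioi 0).const_mul (a i)).indicator measurableSet_Ici
  have key := hasSum_integral_of_summable_integral_norm hFint (by
    simp_rw [Real.norm_of_nonneg (hFnn _ _), hintegral]; exact hs)
  simp_rw [hintegral] at key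
  suffices h : ∫ v in Set.Ioi (0 : ℝ), ∑' i, F i v =
      ∫ v in Set.Ioi (0 : ℝ), Real.exp (-v) * ∑' i, if l i ≤ v / d then a i else 0 from h ▸ key
  refine integral_congr_ae (Eventually.of_forall fun v => ?_)
  simp only
  rw [← tsum_mul_left]
  refine tsum_congr fun i => ?_
  simp only [hF, Set.indicator_apply, Set.mem_Ici, le_div_iff₀' hd]
  split_ifs <;> ring

open MeasureTheory in
theorem tendsto_integral_exp_neg_mul_comp_div {D : ℝ → ℝ} {L C : ℝ} (hm : Measurable D)
    (hC : ∀ u, 0 < u → |D u| ≤ C) (hD : Tendsto D atTop (nhds L)) :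
    Tendsto (fun d : ℝ => ∫ v in Set.Ioi (0 : ℝ), Real.exp (-v) * D (v / d))
      (nhdsWithin 0 (Set.Ioi 0)) (nhds L) := by
  have hlim : L = ∫ v in Set.Ioi (0 : ℝ), Real.exp (-v) * L := by
    rw [integral_mul_const, integral_exp_neg_Ioi]; simp
  rw [hlim]
  refine tendsto_integral_filter_of_dominated_convergence (fun v => Real.exp (-v) * C) ?_ ?_
    ((integrableOn_exp_neg_Ioi 0).mul_const C) ?_
  · refine Eventually.of_forall fun d => Measurable.aestronglyMeasurable ?_
    exact (Real.measurable_exp.comp measurable_neg).mul (hm.comp (measurable_id.div_const d))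
  · filter_upwards [self_mem_nhdsWithin] with d hd
    filter_upwards [ae_restrict_mem measurableSet_Ioi] with v hv
    rw [norm_mul, Real.norm_of_nonneg (Real.exp_pos _).le]
    exact mul_le_mul_of_nonneg_left (hC _ (div_pos hv hd)) (Real.exp_pos _).le
  · filter_upwards [ae_restrict_mem measurableSet_Ioi] with v hv
    refine (hD.comp ?_).const_mul _
    exact Tendsto.const_mul_atTop hv tendsto_inv_nhdsGT_zero

theorem tsum_ite_log_le_prime (u : ℝ) :
    (∑' n : ℕ, if Real.log n ≤ u then (if n.Prime then (1 : ℝ) / n else 0) else 0) =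
      ∑ p ∈ (⌊Real.exp u⌋₊).primesLE, (1 : ℝ) / p := by
  rw [Nat.primesLE_eq_filter_range, Finset.sum_filter, tsum_eq_sum (s := Finset.range _)]
  · refine Finset.sum_congr rfl fun n hn => ?_
    rcases Nat.eq_zero_or_pos n with rfl | hn0
    · simp
    rw [if_pos]
    rw [Real.log_le_iff_le_exp (by exact_mod_cast hn0), ← Nat.le_floor_iff (Real.exp_pos u).le]
    exact Nat.lt_succ_iff.1 (Finset.mem_range.1 hn)
  · intro n hn
    rcases Nat.eq_zero_or_pos n with rfl | hn0
    · simp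
    rw [if_neg]
    rw [Real.log_le_iff_le_exp (by exact_mod_cast hn0), ← Nat.le_floor_iff (Real.exp_pos u).le]
    simpa [Nat.lt_succ_iff] using hn

theorem tsum_ite_le_one_div {u : ℝ} (hu : 0 ≤ u) :
    (∑' n : ℕ, if (n : ℝ) ≤ u then (1 : ℝ) / n else 0) = harmonic ⌊u⌋₊ := by
  rw [harmonic_eq_sum_Icc, tsum_eq_sum (s := Finset.Icc 1 ⌊u⌋₊)]
  · push_cast
    refine Finset.sum_congr rfl fun n hn => ?_
    rw [if_pos, one_div]
    exact (Nat.le_floor_iff hu).1 (Finset.mem_Icc.1 hn).2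
  · intro n hn
    rcases Nat.eq_zero_or_pos n with rfl | hn0
    · simp
    rw [if_neg]
    rw [← Nat.le_floor_iff hu]
    intro h
    exact hn (Finset.mem_Icc.2 ⟨hn0, h⟩)

theorem tendsto_log_natFloor_sub_log :
    Tendsto (fun u : ℝ => Real.log ⌊u⌋₊ - Real.log u) atTop (nhds 0) := by
  have h := (tendsto_nat_floor_div_atTop (R := ℝ)).log one_ne_zero
  rw [Real.log_one] at h
  refine h.congr' ?_
  filter_upwards [eventually_ge_atTop 1] with u hu
  have : (0 : ℝ) < ⌊u⌋₊ := by exact_mod_cast Nat.floor_pos.2 hu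
  rw [Real.log_div this.ne' (by linarith)]

theorem tendsto_log_log_natFloor_exp_sub_log :
    Tendsto (fun u : ℝ => Real.log (Real.log ⌊Real.exp u⌋₊) - Real.log u) atTop (nhds 0) := by
  have h1 : Tendsto (fun u : ℝ => Real.log ⌊Real.exp u⌋₊ - u) atTop (nhds 0) := by
    refine (tendsto_log_natFloor_sub_log.comp Real.tendsto_exp_atTop).congr fun u => ?_
    simp
  have h2 : Tendsto (fun u : ℝ => Real.log ⌊Real.exp u⌋₊ / u) atTop (nhds 1) := by
    have := (h1.div_atTop tendsto_id).add_const 1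
    rw [zero_add] at this
    refine this.congr' ?_
    filter_upwards [eventually_gt_atTop 0] with u hu
    simp only [id]
    field_simp
    ring
  have h3 := h2.log one_ne_zero
  rw [Real.log_one] at h3
  refine h3.congr' ?_
  filter_upwards [eventually_ge_atTop 1] with u hu
  have he : (2 : ℝ) ≤ Real.exp u := by
    have := Real.add_one_le_exp u; linarith
  have hf : 2 ≤ ⌊Real.exp u⌋₊ := Nat.le_floor (by exact_mod_cast he)
  have hf' : (1 : ℝ) < ⌊Real.exp u⌋₊ := by exact_mod_cast hf
  rw [Real.log_div (Real.log_pos hf').ne' (by linarith)]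

theorem sum_primesLE_one_div_mono : Monotone fun n : ℕ => ∑ p ∈ n.primesLE, (1 : ℝ) / p :=
  fun _ _ h => Finset.sum_le_sum_of_subset_of_nonneg (Nat.primesLE_mono h)
    fun _ _ _ => by positivity

theorem harmonic_cast_mono : Monotone fun n : ℕ => (harmonic n : ℝ) :=
  monotone_nat_of_le_succ fun n => by
    rw [harmonic_succ]; push_cast
    have : (0 : ℝ) ≤ ((n : ℝ) + 1)⁻¹ := by positivity
    linarith

theorem harmonic_cast_le (n : ℕ) : (harmonic n : ℝ) ≤ n := by
  induction n with
  | zero => simp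
  | succ n ih =>
    rw [harmonic_succ]; push_cast
    have : ((n : ℝ) + 1)⁻¹ ≤ 1 := inv_le_one_of_one_le₀ (by linarith [n.cast_nonneg (α := ℝ)])
    linarith

theorem hasSum_one_div_mul_exp_neg_mul {d : ℝ} (hd : 0 < d) :
    HasSum (fun n : ℕ => (1 : ℝ) / n * Real.exp (-(d * n))) (-Real.log (1 - Real.exp (-d))) := by
  have h1 : |Real.exp (-d)| < 1 := by
    rw [abs_of_pos (Real.exp_pos _)]; simpa using hd
  have h := Real.hasSum_pow_div_log_of_abs_lt_one h1
  rw [← hasSum_nat_add_iff' 1]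
  simp only [Finset.range_one, Finset.sum_singleton, Nat.cast_zero, div_zero, zero_mul, sub_zero]
  have heq : (fun n : ℕ => (1 : ℝ) / ((n + 1 : ℕ) : ℝ) * Real.exp (-(d * ((n + 1 : ℕ) : ℝ)))) =
      fun n : ℕ => Real.exp (-d) ^ (n + 1) / ((n : ℝ) + 1) := by
    funext n
    rw [← Real.exp_nat_mul, div_mul_eq_mul_div, one_mul]
    push_cast
    congr 2
    ring
  rw [heq]
  exact h

theorem prime_term_eq_rpow (d : ℝ) (n : ℕ) :
    (if n.Prime then (1 : ℝ) / n else 0) * Real.exp (-(d * Real.log n)) =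
      if n.Prime then (n : ℝ) ^ (-(1 + d)) else 0 := by
  split_ifs with hn
  · have : (0 : ℝ) < n := by exact_mod_cast hn.pos
    rw [Real.rpow_def_of_pos this, one_div, ← Real.exp_log this, ← Real.exp_neg, ← Real.exp_add,
      Real.log_exp]
    ring_nf
  · simp

open MeasureTheory in
theorem tendsto_tsum_primes_rpow_add_log {M : ℝ}
    (hM : Tendsto (fun n : ℕ => ∑ p ∈ n.primesLE, (1 : ℝ) / p - Real.log (Real.log n)) atTop
      (nhds M)) :
    Tendsto (fun d : ℝ => ∑' p : Nat.Primes, ((p : ℕ) : ℝ) ^ (-(1 + d))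
        + Real.log (1 - Real.exp (-d)))
      (nhdsWithin 0 (Set.Ioi 0)) (nhds (M - Real.eulerMascheroniConstant)) := by
  set P : ℝ → ℝ := fun u => ∑ p ∈ (⌊Real.exp u⌋₊).primesLE, (1 : ℝ) / p with hP
  set H : ℝ → ℝ := fun u => harmonic ⌊u⌋₊ with hH
  have hPm : Measurable P :=
    (measurable_of_countable fun n : ℕ => ∑ p ∈ n.primesLE, (1 : ℝ) / p).comp
      (Nat.measurable_floor.comp Real.measurable_exp)
  have hHm : Measurable H :=
    (measurable_of_countable fun n : ℕ => (harmonic n : ℝ)).comp Nat.measurable_floor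
  have hD : Tendsto (fun u => P u - H u) atTop (nhds (M - Real.eulerMascheroniConstant)) := by
    have t1 := hM.comp (tendsto_nat_floor_atTop.comp Real.tendsto_exp_atTop)
    have t2 := Real.tendsto_harmonic_sub_log.comp (tendsto_nat_floor_atTop (α := ℝ))
    have := ((t1.sub t2).add tendsto_log_log_natFloor_exp_sub_log).sub tendsto_log_natFloor_sub_log
    simp only [add_zero, sub_zero] at this
    refine this.congr fun u => ?_
    simp only [Function.comp, hP, hH]
    ring
  have hP0 : ∀ u, 0 ≤ P u := fun u => Finset.sum_nonneg fun _ _ => by positivity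
  have hH0 : ∀ u, 0 ≤ H u := fun u => by
    have : ((harmonic 0 : ℚ) : ℝ) ≤ harmonic ⌊u⌋₊ := harmonic_cast_mono (Nat.zero_le _)
    rwa [harmonic_zero, Rat.cast_zero] at this
  obtain ⟨C, hC⟩ : ∃ C, ∀ u, 0 < u → |P u - H u| ≤ C := by
    obtain ⟨U, hU⟩ := eventually_atTop.1
      (hD.abs.eventually_le_const (lt_add_one |M - Real.eulerMascheroniConstant|))
    refine ⟨max (|M - Real.eulerMascheroniConstant| + 1) (P U + H U), fun u _ => ?_⟩
    rcases le_total U u with h | h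
    · exact (hU u h).trans (le_max_left _ _)
    · refine le_trans ?_ (le_max_right _ _)
      have h1 : P u ≤ P U := sum_primesLE_one_div_mono (Nat.floor_mono (Real.exp_le_exp.2 h))
      have h2 : H u ≤ H U := harmonic_cast_mono (Nat.floor_mono h)
      rw [abs_le]
      constructor <;> linarith [hP0 u, hH0 u]
  refine (tendsto_integral_exp_neg_mul_comp_div (hPm.sub hHm) hC hD).congr' ?_
  filter_upwards [self_mem_nhdsWithin] with d hd
  have hd0 : (0 : ℝ) < d := hd
  have hmeas : ∀ f : ℝ → ℝ, Measurable f → AEStronglyMeasurable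
      (fun v => Real.exp (-v) * f (v / d)) (volume.restrict (Set.Ioi (0 : ℝ))) := fun f hf =>
    ((Real.measurable_exp.comp measurable_neg).mul
      (hf.comp (measurable_id.div_const d))).aestronglyMeasurable
  have hHi : Integrable (fun v => Real.exp (-v) * H (v / d))
      (volume.restrict (Set.Ioi (0 : ℝ))) := by
    have hg : IntegrableOn (fun v : ℝ => Real.exp (-v) * v ^ ((2 : ℝ) - 1)) (Set.Ioi 0) :=
      Real.GammaIntegral_convergent (by norm_num)
    refine (hg.const_mul (1 / d)).mono' (hmeas H hHm) ?_
    filter_upwards [ae_restrict_mem measurableSet_Ioi] with v hv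
    have hv0 : (0 : ℝ) < v := hv
    rw [Real.norm_of_nonneg (mul_nonneg (Real.exp_pos _).le (hH0 _))]
    have : H (v / d) ≤ v / d :=
      (harmonic_cast_le _).trans (Nat.floor_le (div_pos hv0 hd0).le)
    calc _ ≤ Real.exp (-v) * (v / d) := mul_le_mul_of_nonneg_left this (Real.exp_pos _).le
      _ = _ := by norm_num; ring
  have hDi : Integrable (fun v => Real.exp (-v) * (P (v / d) - H (v / d)))
      (volume.restrict (Set.Ioi (0 : ℝ))) := by
    refine ((integrableOn_exp_neg_Ioi 0).mul_const C).mono' (hmeas _ (hPm.sub hHm)) ?_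
    filter_upwards [ae_restrict_mem measurableSet_Ioi] with v hv
    rw [norm_mul, Real.norm_of_nonneg (Real.exp_pos _).le]
    exact mul_le_mul_of_nonneg_left (hC _ (div_pos hv hd0)) (Real.exp_pos _).le
  have hsumP : Summable fun n : ℕ => if n.Prime then (n : ℝ) ^ (-(1 + d)) else 0 :=
    (Nat.Primes.summable_iff_summable_ite _).1 (Nat.Primes.summable_rpow.2 (by linarith))
  have e1 := hasSum_mul_exp_neg_mul_integral (a := fun n : ℕ => if n.Prime then (1 : ℝ) / n else 0)
    (l := fun n => Real.log n) (fun n => by positivity) (fun n => Real.log_natCast_nonneg n) hd0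
    (by simp_rw [prime_term_eq_rpow]; exact hsumP)
  have e2 := hasSum_mul_exp_neg_mul_integral (a := fun n : ℕ => (1 : ℝ) / n)
    (l := fun n => (n : ℝ)) (fun n => by positivity) (fun n => by positivity) hd0
    (hasSum_one_div_mul_exp_neg_mul hd0).summable
  have e2' := e2.unique (hasSum_one_div_mul_exp_neg_mul hd0)
  have e3 : ∫ v in Set.Ioi (0 : ℝ), Real.exp (-v) *
      (∑' n : ℕ, if (n : ℝ) ≤ v / d then (1 : ℝ) / n else 0) =
      ∫ v in Set.Ioi (0 : ℝ), Real.exp (-v) * H (v / d) := by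
    refine setIntegral_congr_fun measurableSet_Ioi fun v hv => ?_
    simp only [hH]
    rw [tsum_ite_le_one_div (div_pos hv hd0).le]
  simp_rw [prime_term_eq_rpow, tsum_ite_log_le_prime] at e1
  have e4 : ∫ v in Set.Ioi (0 : ℝ), Real.exp (-v) * P (v / d) =
      (∫ v in Set.Ioi (0 : ℝ), Real.exp (-v) * (P (v / d) - H (v / d))) +
        ∫ v in Set.Ioi (0 : ℝ), Real.exp (-v) * H (v / d) := by
    rw [← integral_add hDi hHi]
    congr 1 with v
    ring
  rw [Nat.Primes.tsum_eq_tsum_ite (fun n : ℕ => (n : ℝ) ^ (-(1 + d))), e1.tsum_eq]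
  simp only [hP] at e4 ⊢
  simp only [Pi.sub_apply]
  linarith

theorem abs_neg_log_one_sub_sub_le {x : ℝ} (h0 : 0 ≤ x) (h1 : x ≤ 1 / 2) :
    |-Real.log (1 - x) - x| ≤ 2 * x ^ 2 := by
  have h := Real.abs_log_sub_add_sum_range_le (x := x) (by rw [abs_of_nonneg h0]; linarith) 1
  rw [abs_of_nonneg h0] at h
  simp only [Finset.range_one, Finset.sum_singleton, zero_add, pow_one, Nat.cast_zero,
    div_one] at h
  rw [show -Real.log (1 - x) - x = -(x + Real.log (1 - x)) by ring, abs_neg]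
  refine h.trans ?_
  rw [div_le_iff₀ (by linarith)]
  norm_num
  nlinarith [sq_nonneg x]

theorem Nat.Primes.rpow_neg_le_inv (p : Nat.Primes) {s : ℝ} (hs : 1 ≤ s) :
    ((p : ℕ) : ℝ) ^ (-s) ≤ ((p : ℕ) : ℝ)⁻¹ := by
  rw [← Real.rpow_neg_one]
  exact Real.rpow_le_rpow_of_exponent_le (by exact_mod_cast p.2.one_lt.le) (by linarith)

theorem Nat.Primes.inv_le_half (p : Nat.Primes) : ((p : ℕ) : ℝ)⁻¹ ≤ 1 / 2 := by
  rw [← one_div]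
  exact one_div_le_one_div_of_le two_pos (by exact_mod_cast p.2.two_le)

theorem Nat.Primes.abs_neg_log_one_sub_rpow_sub_le (p : Nat.Primes) {s : ℝ} (hs : 1 ≤ s) :
    |-Real.log (1 - ((p : ℕ) : ℝ) ^ (-s)) - ((p : ℕ) : ℝ) ^ (-s)| ≤
      2 * ((p : ℕ) : ℝ) ^ (-2 : ℝ) := by
  have hx0 : 0 ≤ ((p : ℕ) : ℝ) ^ (-s) := by positivity
  have hx := p.rpow_neg_le_inv hs
  refine (abs_neg_log_one_sub_sub_le hx0 (hx.trans p.inv_le_half)).trans ?_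
  have e : ((p : ℕ) : ℝ) ^ (-2 : ℝ) = (((p : ℕ) : ℝ)⁻¹) ^ 2 := by
    rw [Real.rpow_neg (by positivity), Real.rpow_two, inv_pow]
  rw [e]
  gcongr

theorem tendsto_tsum_neg_log_one_sub_rpow_sub :
    Tendsto (fun d : ℝ => ∑' p : Nat.Primes,
        (-Real.log (1 - ((p : ℕ) : ℝ) ^ (-(1 + d))) - ((p : ℕ) : ℝ) ^ (-(1 + d))))
      (nhdsWithin 0 (Set.Ioi 0))
      (nhds (∑' p : Nat.Primes, (-Real.log (1 - ((p : ℕ) : ℝ)⁻¹) - ((p : ℕ) : ℝ)⁻¹))) := by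
  refine tendsto_tsum_of_dominated_convergence
    ((Nat.Primes.summable_rpow.2 (by norm_num : (-2 : ℝ) < -1)).mul_left 2) (fun p => ?_) ?_
  · have hp : (0 : ℝ) < (p : ℕ) := by exact_mod_cast p.2.pos
    have h1 : Tendsto (fun d : ℝ => ((p : ℕ) : ℝ) ^ (-(1 + d))) (nhdsWithin 0 (Set.Ioi 0))
        (nhds ((p : ℕ) : ℝ)⁻¹) := by
      have : Continuous fun d : ℝ => ((p : ℕ) : ℝ) ^ (-(1 + d)) :=
        Continuous.rpow continuous_const (by fun_prop) fun _ => Or.inl hp.ne'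
      have := this.tendsto 0
      rw [add_zero, Real.rpow_neg_one] at this
      exact this.mono_left nhdsWithin_le_nhds
    refine ((h1.const_sub 1).log ?_).neg.sub h1
    have := p.inv_le_half
    linarith
  · filter_upwards [self_mem_nhdsWithin] with d hd p
    have hd0 : (0 : ℝ) < d := hd
    exact p.abs_neg_log_one_sub_rpow_sub_le (by linarith)

theorem tsum_neg_log_one_sub_rpow_eq {s : ℝ} (hs : 1 < s) :
    Summable (fun p : Nat.Primes => -Real.log (1 - ((p : ℕ) : ℝ) ^ (-s))) ∧
    ∑' p : Nat.Primes, -Real.log (1 - ((p : ℕ) : ℝ) ^ (-s)) =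
      Real.log (∑' n : ℕ, 1 / (n : ℝ) ^ s) := by
  have hpos : ∀ p : Nat.Primes, 0 < (1 - ((p : ℕ) : ℝ) ^ (-s))⁻¹ := fun p => by
    have := (p.rpow_neg_le_inv hs.le).trans p.inv_le_half
    exact inv_pos.2 (by linarith)
  have hsum1 : Summable fun p : Nat.Primes => ((p : ℕ) : ℝ) ^ (-s) :=
    Nat.Primes.summable_rpow.2 (by linarith)
  have hsum2 : Summable fun p : Nat.Primes =>
      (-Real.log (1 - ((p : ℕ) : ℝ) ^ (-s)) - ((p : ℕ) : ℝ) ^ (-s)) :=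
    Summable.of_norm_bounded
      ((Nat.Primes.summable_rpow.2 (by norm_num : (-2 : ℝ) < -1)).mul_left 2)
      fun p => p.abs_neg_log_one_sub_rpow_sub_le hs.le
  have hsum : Summable fun p : Nat.Primes => -Real.log (1 - ((p : ℕ) : ℝ) ^ (-s)) := by
    simpa using hsum2.add hsum1
  refine ⟨hsum, ?_⟩
  let f : ℕ →*₀ ℝ :=
    { toFun := fun n => (n : ℝ) ^ (-s)
      map_zero' := by simp [Real.zero_rpow (by linarith : -s ≠ 0)]
      map_one' := by simp
      map_mul' := fun m n => by
        push_cast; exact Real.mul_rpow (by positivity) (by positivity) }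
  have hf : Summable fun n => ‖f n‖ := by
    have : ∀ n, ‖f n‖ = ((n : ℝ) ^ s)⁻¹ := fun n => by
      rw [← Real.rpow_neg (by positivity)]
      exact Real.norm_of_nonneg (Real.rpow_nonneg n.cast_nonneg (-s))
    simp_rw [this]
    exact Real.summable_nat_rpow_inv.2 hs
  have hprod := (EulerProduct.eulerProduct_completely_multiplicative_hasProd hf).tprod_eq
  have hexp := Real.rexp_tsum_eq_tprod hpos (by simpa [Real.log_inv] using hsum)
  have h1 : ∑' n : ℕ, 1 / (n : ℝ) ^ s = ∑' n, f n := by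
    refine tsum_congr fun n => ?_
    rw [one_div, ← Real.rpow_neg (by positivity)]
    rfl
  rw [h1, ← hprod]
  change _ = Real.log (∏' p : Nat.Primes, (1 - ((p : ℕ) : ℝ) ^ (-s))⁻¹)
  rw [← hexp, Real.log_exp]
  simp_rw [Real.log_inv]

theorem tendsto_log_tsum_add_log :
    Tendsto (fun d : ℝ => Real.log (∑' n : ℕ, 1 / (n : ℝ) ^ (1 + d))
        + Real.log (1 - Real.exp (-d)))
      (nhdsWithin 0 (Set.Ioi 0)) (nhds 0) := by
  have h1 : Tendsto (fun d : ℝ => d * ∑' n : ℕ, 1 / (n : ℝ) ^ (1 + d))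
      (nhdsWithin 0 (Set.Ioi 0)) (nhds 1) := by
    have hshift : Tendsto (fun d : ℝ => 1 + d) (nhdsWithin 0 (Set.Ioi 0))
        (nhdsWithin 1 (Set.Ioi 1)) := by
      refine tendsto_nhdsWithin_iff.2 ⟨?_, ?_⟩
      · have : Tendsto (fun d : ℝ => 1 + d) (nhds 0) (nhds (1 + 0)) :=
          (continuous_const.add continuous_id).tendsto 0
        rw [add_zero] at this
        exact this.mono_left nhdsWithin_le_nhds
      · filter_upwards [self_mem_nhdsWithin] with d hd
        have : (0 : ℝ) < d := hd
        simpa using this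
    refine (tendsto_sub_mul_tsum_nat_rpow.comp hshift).congr fun d => ?_
    simp
  have h2 : Tendsto (fun d : ℝ => (1 - Real.exp (-d)) / d) (nhdsWithin 0 (Set.Ioi 0))
      (nhds 1) := by
    have hder : HasDerivAt (fun d : ℝ => 1 - Real.exp (-d)) 1 0 := by
      have := ((hasDerivAt_neg (0 : ℝ)).exp).const_sub 1
      simpa using this
    have := hder.tendsto_slope_zero_right
    refine this.congr fun d => ?_
    simp [div_eq_inv_mul]
  have h3 := (h1.log one_ne_zero).add (h2.log one_ne_zero)
  rw [Real.log_one, add_zero] at h3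
  refine h3.congr' ?_
  have hne := h1.eventually_ne one_ne_zero
  filter_upwards [self_mem_nhdsWithin, hne] with d hd hne
  have hd0 : (0 : ℝ) < d := hd
  have he : Real.exp (-d) < 1 := by simpa using hd0
  rw [Real.log_mul hd0.ne' (right_ne_zero_of_mul hne), Real.log_div (by linarith) hd0.ne']
  ring

/-- The constant in Mertens' second theorem, in terms of the Euler–Mascheroni constant. -/
theorem add_tsum_primes_eq_eulerMascheroniConstant {M : ℝ}
    (hM : Tendsto (fun n : ℕ => ∑ p ∈ n.primesLE, (1 : ℝ) / p - Real.log (Real.log n)) atTop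
      (nhds M)) :
    M + ∑' p : Nat.Primes, (-Real.log (1 - ((p : ℕ) : ℝ)⁻¹) - ((p : ℕ) : ℝ)⁻¹) =
      Real.eulerMascheroniConstant := by
  have h1 := tendsto_tsum_primes_rpow_add_log hM
  have h2 := tendsto_log_tsum_add_log.sub tendsto_tsum_neg_log_one_sub_rpow_sub
  have h3 := tendsto_nhds_unique_of_eventuallyEq h1 h2 (by
    filter_upwards [self_mem_nhdsWithin] with d hd
    have hd0 : (0 : ℝ) < d := hd
    obtain ⟨hs, he⟩ := tsum_neg_log_one_sub_rpow_eq (s := 1 + d) (by linarith)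
    rw [hs.tsum_sub (Nat.Primes.summable_rpow.2 (by linarith)), he]
    ring)
  linarith

/-- **Mertens' third theorem.** -/
theorem exists_abs_sum_neg_log_one_sub_inv_le :
    ∃ K : ℝ, ∀ n : ℕ, 2 ≤ n →
      |∑ p ∈ n.primesLE, -Real.log (1 - (p : ℝ)⁻¹) - Real.log (Real.log n)
        - Real.eulerMascheroniConstant| ≤ K / Real.log n := by
  obtain ⟨M, K, hK⟩ := exists_abs_sum_inv_sub_log_log_sub_le
  have hlog : Tendsto (fun n : ℕ => Real.log n) atTop atTop :=
    Real.tendsto_log_atTop.comp tendsto_natCast_atTop_atTop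
  have hM : Tendsto (fun n : ℕ => ∑ p ∈ n.primesLE, (1 : ℝ) / p - Real.log (Real.log n)) atTop
      (nhds M) := by
    rw [tendsto_iff_norm_sub_tendsto_zero]
    refine tendsto_of_tendsto_of_tendsto_of_le_of_le' tendsto_const_nhds
      (hlog.const_div_atTop K) (Eventually.of_forall fun n => norm_nonneg _) ?_
    filter_upwards [eventually_ge_atTop 2] with n hn using hK n hn
  have hγ := add_tsum_primes_eq_eulerMascheroniConstant hM
  set b : ℕ → ℝ := fun p => -Real.log (1 - (p : ℝ)⁻¹) - (p : ℝ)⁻¹ with hb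
  have hbp : ∀ p : ℕ, p.Prime → |b p| ≤ 2 * ((p : ℝ)⁻¹) ^ 2 := fun p hp =>
    abs_neg_log_one_sub_sub_le (by positivity) (Nat.Primes.inv_le_half ⟨p, hp⟩)
  have hsumb : Summable fun p : Nat.Primes => b p :=
    Summable.of_norm_bounded
      ((Nat.Primes.summable_rpow.2 (by norm_num : (-2 : ℝ) < -1)).mul_left 2) fun p => by
        refine (hbp p p.2).trans_eq ?_
        rw [Real.rpow_neg (by positivity), Real.rpow_two, inv_pow]
  have hlim : Tendsto (fun n : ℕ => ∑ p ∈ n.primesLE, b p) atTop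
      (nhds (∑' p : Nat.Primes, b p)) := by
    rw [Nat.Primes.tsum_eq_tsum_ite b]
    have := ((Nat.Primes.summable_iff_summable_ite b).1 hsumb).hasSum.tendsto_sum_nat
    refine (this.comp (tendsto_add_atTop_nat 1)).congr fun n => ?_
    rw [Nat.primesLE_eq_filter_range, Finset.sum_filter]
    rfl
  obtain ⟨M', hM', hM'b⟩ := exists_tendsto_and_abs_sub_le_of_abs_sub_succ_le (n₀ := 1)
    (u := fun n : ℕ => ∑ p ∈ n.primesLE, b p) (v := fun n : ℕ => 2 / n)
    (tendsto_const_div_atTop_nhds_zero_nat 2) (by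
      intro n hn
      have hn0 : (0 : ℝ) < n := by exact_mod_cast hn
      have hge : 2 * (((n + 1 : ℕ) : ℝ)⁻¹) ^ 2 ≤ 2 / (n : ℝ) - 2 / ((n + 1 : ℕ) : ℝ) := by
        push_cast
        rw [div_sub_div _ _ hn0.ne' (by positivity), le_div_iff₀ (by positivity), inv_pow]
        field_simp
        nlinarith
      rw [sum_primesLE_succ, add_sub_cancel_left]
      refine le_trans ?_ hge
      split_ifs with hp
      · exact hbp _ hp
      · rw [abs_zero]; positivity)
  have hMM : M' = ∑' p : Nat.Primes, b p := tendsto_nhds_unique hM' hlim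
  refine ⟨K + 2, fun n hn => ?_⟩
  have hn2 : (2 : ℝ) ≤ n := by exact_mod_cast hn
  have hl0 : 0 < Real.log n := Real.log_pos (by linarith)
  have h1 := hK n hn
  have h2 := hM'b n (by omega)
  have h3 : 2 / (n : ℝ) ≤ 2 / Real.log n :=
    div_le_div_of_nonneg_left two_pos.le hl0 ((Real.log_le_sub_one_of_pos (by linarith)).trans
      (by linarith))
  have h4 : ∑ p ∈ n.primesLE, -Real.log (1 - (p : ℝ)⁻¹) - Real.log (Real.log n)
        - Real.eulerMascheroniConstant =
      (∑ p ∈ n.primesLE, (1 : ℝ) / p - Real.log (Real.log n) - M) +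
        (∑ p ∈ n.primesLE, b p - M') := by
    rw [← hγ, hMM]
    simp only [hb, Finset.sum_sub_distrib, one_div]
    ring
  rw [h4]
  refine (abs_add_le _ _).trans ?_
  rw [add_div]
  linarith

theorem abs_card_filter_intCast_eq_sub_le {Q : ℕ} [NeZero Q] (r : ZMod Q) (N : ℕ) :
    |(((Finset.Ioc (0 : ℤ) N).filter fun x : ℤ => (x : ZMod Q) = r).card : ℝ) - N / Q| ≤ 1 := by
  have hQ : (0 : ℤ) < Q := by exact_mod_cast NeZero.pos Q
  have hset : ((Finset.Ioc (0 : ℤ) N).filter fun x : ℤ => (x : ZMod Q) = r) =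
      (Finset.Ioc (0 : ℤ) N).filter fun x => x ≡ (r.val : ℤ) [ZMOD Q] := by
    refine Finset.filter_congr fun x _ => ?_
    rw [← ZMod.intCast_eq_intCast_iff]
    simp
  have h := Int.Ioc_filter_modEq_card 0 N hQ (r.val : ℤ)
  rw [← hset] at h
  set c := ((Finset.Ioc (0 : ℤ) N).filter fun x : ℤ => (x : ZMod Q) = r).card
  set u : ℚ := (((N : ℤ) : ℚ) - ((r.val : ℤ) : ℚ)) / ((Q : ℤ) : ℚ) with hu
  set w : ℚ := (((0 : ℤ) : ℚ) - ((r.val : ℤ) : ℚ)) / ((Q : ℤ) : ℚ) with hw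
  have huw : u - w = (N : ℚ) / Q := by
    rw [hu, hw]; push_cast; ring
  have hle : ⌊w⌋ ≤ ⌊u⌋ := Int.floor_le_floor (by
    have : (0 : ℚ) ≤ (N : ℚ) / Q := by positivity
    linarith)
  rw [max_eq_left (by linarith)] at h
  have hc : (c : ℚ) = ⌊u⌋ - ⌊w⌋ := by exact_mod_cast h
  have key : |(c : ℚ) - N / Q| ≤ 1 := by
    rw [hc, abs_le]
    constructor <;>
      linarith [Int.floor_le u, Int.lt_floor_add_one u, Int.floor_le w, Int.lt_floor_add_one w]
  have key' := (Rat.cast_le (K := ℝ)).2 key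
  push_cast at key'
  exact key'

theorem tendsto_card_filter_intCast_eq_div {Q : ℕ} [NeZero Q] (r : ZMod Q) :
    Tendsto (fun N : ℕ =>
      (((Finset.Ioc (0 : ℤ) N).filter fun x : ℤ => (x : ZMod Q) = r).card : ℝ) / N)
      atTop (nhds (1 / Q)) := by
  rw [tendsto_iff_dist_tendsto_zero]
  refine squeeze_zero' (Eventually.of_forall fun _ => dist_nonneg) ?_
    tendsto_one_div_atTop_nhds_zero_nat
  filter_upwards [eventually_gt_atTop 0] with N hN
  have hN' : (0 : ℝ) < N := by exact_mod_cast hN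
  have hQ' : (0 : ℝ) < Q := by exact_mod_cast NeZero.pos Q
  have h := abs_card_filter_intCast_eq_sub_le r N
  rw [Real.dist_eq, le_div_iff₀ hN', ← abs_of_pos hN', ← abs_mul, abs_of_pos hN']
  refine le_trans (le_of_eq ?_) h
  congr 1
  field_simp

theorem card_tuples_residues_mem_eq_sum {Q : ℕ} [NeZero Q] {m : ℕ}
    (A : Finset (Fin m → ZMod Q)) (N : ℕ) :
    ((Fintype.piFinset fun _ : Fin m => Finset.Ioc (0 : ℤ) N).filter
        fun h => (fun i => (h i : ZMod Q)) ∈ A).card =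
      ∑ g ∈ A, ∏ i, ((Finset.Ioc (0 : ℤ) N).filter fun x : ℤ => (x : ZMod Q) = g i).card := by
  rw [Finset.card_eq_sum_card_fiberwise (f := fun h : Fin m → ℤ => fun i => (h i : ZMod Q)) (t := A)
    (by intro h hh; exact (Finset.mem_filter.1 hh).2)]
  refine Finset.sum_congr rfl fun g hg => ?_
  rw [← Fintype.card_piFinset]
  congr 1
  ext h
  simp only [Finset.mem_filter, Fintype.mem_piFinset, funext_iff]
  constructor
  · rintro ⟨⟨h1, -⟩, h2⟩ i
    exact ⟨h1 i, h2 i⟩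
  · intro h1
    have : (fun i => (h i : ZMod Q)) = g := funext fun i => (h1 i).2
    exact ⟨⟨fun i => (h1 i).1, this ▸ hg⟩, fun i => (h1 i).2⟩

theorem tendsto_card_tuples_residues_mem_div {Q : ℕ} [NeZero Q] {m : ℕ}
    (A : Finset (Fin m → ZMod Q)) :
    Tendsto (fun N : ℕ => (((Fintype.piFinset fun _ : Fin m => Finset.Ioc (0 : ℤ) N).filter
        fun h => (fun i => (h i : ZMod Q)) ∈ A).card : ℝ) / (N : ℝ) ^ m)
      atTop (nhds (A.card / (Q : ℝ) ^ m)) := by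
  have h : Tendsto (fun N : ℕ => ∑ g ∈ A, ∏ i : Fin m,
      (((Finset.Ioc (0 : ℤ) N).filter fun x : ℤ => (x : ZMod Q) = g i).card : ℝ) / N) atTop
      (nhds (∑ g ∈ A, ∏ _i : Fin m, (1 / (Q : ℝ)))) :=
    tendsto_finsetSum _ fun g _ => tendsto_finsetProd _ fun i _ =>
      tendsto_card_filter_intCast_eq_div (g i)
  convert h using 2 with N
  · rw [card_tuples_residues_mem_eq_sum]
    push_cast
    rw [Finset.sum_div]
    refine Finset.sum_congr rfl fun g _ => ?_
    rw [Finset.prod_div_distrib]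
    simp
  · simp [div_eq_mul_inv]

instance neZero_coe_primesLE {n : ℕ} (p : {p // p ∈ n.primesLE}) : NeZero (p : ℕ) :=
  ⟨(Nat.mem_primesLE.1 p.2).2.ne_zero⟩

/-- The number of `m`-tuples of residues modulo `p` that miss at least one residue class. -/
noncomputable def nonCoveringCount (m p : ℕ) : ℕ :=
  Nat.card {f : Fin m → ZMod p // ∃ r, ∀ i, f i ≠ r}

theorem nonCoveringCount_le_pow (m p : ℕ) [NeZero p] : nonCoveringCount m p ≤ p ^ m := by
  refine (Nat.card_le_card_of_injective _ Subtype.val_injective).trans_eq ?_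
  simp

theorem card_ne_zmod (m : ℕ) {p : ℕ} [NeZero p] (r : ZMod p) :
    Nat.card {f : Fin m → ZMod p // ∀ i, f i ≠ r} = (p - 1) ^ m := by
  rw [Nat.card_congr (Equiv.subtypePiEquivPi (p := fun (_ : Fin m) (x : ZMod p) => x ≠ r)),
    Nat.card_pi]
  simp [Nat.card_eq_fintype_card]

theorem pow_le_nonCoveringCount (m p : ℕ) [NeZero p] : (p - 1) ^ m ≤ nonCoveringCount m p := by
  rw [← card_ne_zmod m (0 : ZMod p)]
  exact Nat.card_le_card_of_injective
    (fun f => (⟨f.1, 0, f.2⟩ : {f : Fin m → ZMod p // ∃ r, ∀ i, f i ≠ r}))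
    fun f g h => Subtype.ext (congrArg (fun x => x.1) h)

theorem nonCoveringCount_le_mul_pow (m p : ℕ) [NeZero p] :
    nonCoveringCount m p ≤ p * (p - 1) ^ m := by
  have h : Nat.card (Σ r : ZMod p, {f : Fin m → ZMod p // ∀ i, f i ≠ r}) = p * (p - 1) ^ m := by
    rw [Nat.card_sigma]
    simp only [card_ne_zmod]
    simp [ZMod.card]
  rw [← h]
  exact Nat.card_le_card_of_surjective
    (fun x : Σ r : ZMod p, {f : Fin m → ZMod p // ∀ i, f i ≠ r} =>
      (⟨x.2.1, x.1, x.2.2⟩ : {f : Fin m → ZMod p // ∃ r, ∀ i, f i ≠ r}))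
    fun ⟨f, r, hf⟩ => ⟨⟨r, f, hf⟩, rfl⟩

theorem admissibleTuple_iff_forall_primesLE {m : ℕ} (h : Fin m → ℤ) :
    AdmissibleTuple h ↔
      ∀ p : {p // p ∈ m.primesLE}, ∃ r : ZMod p, ∀ i, (h i : ZMod p) ≠ r := by
  refine ⟨fun H p => H p (Nat.mem_primesLE.1 p.2).2, fun H p hp => ?_⟩
  by_cases hpm : p ≤ m
  · exact H ⟨p, Nat.mem_primesLE.2 ⟨hpm, hp⟩⟩
  · by_contra! hcov
    have : NeZero p := ⟨hp.ne_zero⟩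
    have := Fintype.card_le_of_surjective (fun i : Fin m => (h i : ZMod p)) hcov
    rw [ZMod.card, Fintype.card_fin] at this
    exact hpm this

theorem tendsto_admCount_div_pow (m : ℕ) :
    Tendsto (fun N : ℕ => (admCount m N : ℝ) / (N : ℝ) ^ m) atTop
      (nhds (∏ p ∈ m.primesLE, (nonCoveringCount m p : ℝ) / (p : ℝ) ^ m)) := by
  classical
  set S := {p // p ∈ m.primesLE}
  have hcop : Pairwise fun p q : S => Nat.Coprime (p : ℕ) q := fun p q hpq =>
    (Nat.coprime_primes (Nat.mem_primesLE.1 p.2).2 (Nat.mem_primesLE.1 q.2).2).2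
      fun h => hpq (Subtype.ext h)
  set Q : ℕ := ∏ p : S, (p : ℕ) with hQ
  have : NeZero Q := ⟨Finset.prod_ne_zero_iff.2 fun p _ => NeZero.ne _⟩
  let e : ZMod Q ≃+* ∀ p : S, ZMod p := ZMod.prodEquivPi (fun p : S => (p : ℕ)) hcop
  have he : ∀ (x : ℤ) (p : S), e (x : ZMod Q) p = (x : ZMod p) := fun x p => by
    rw [map_intCast, Pi.intCast_apply]
  let A : Finset (Fin m → ZMod Q) :=
    Finset.univ.filter fun g => ∀ p : S, ∃ r, ∀ i, e (g i) p ≠ r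
  have hadm : ∀ N : ℕ, admCount m N =
      ((Fintype.piFinset fun _ : Fin m => Finset.Ioc (0 : ℤ) N).filter
        fun h => (fun i => (h i : ZMod Q)) ∈ A).card := fun N => by
    refine Nat.subtype_card _ fun h => ?_
    simp only [A, Finset.mem_filter, Fintype.mem_piFinset, Finset.mem_Ioc, Finset.mem_univ,
      true_and, he, admissibleTuple_iff_forall_primesLE, Order.one_le_iff_pos]
    rfl
  have hA : A.card = ∏ p : S, nonCoveringCount m p := by
    simp only [nonCoveringCount]
    rw [← Nat.card_pi, ← Nat.card_congr (Equiv.subtypePiEquivPi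
      (p := fun (p : S) (f : Fin m → ZMod p) => ∃ r, ∀ i, f i ≠ r)), ← Nat.subtype_card A
      fun g => by simp only [A, Finset.mem_filter, Finset.mem_univ, true_and]; rfl]
    exact Nat.card_congr
      (((Equiv.piCongrRight fun _ => e.toEquiv).trans (Equiv.piComm _)).subtypeEquiv
        fun g => Iff.rfl)
  have h := tendsto_card_tuples_residues_mem_div A
  simp_rw [← hadm] at h
  convert h using 2
  rw [hA, hQ]
  push_cast
  rw [← Finset.prod_pow, ← Finset.prod_div_distrib]
  exact (Finset.prod_coe_sort m.primesLE fun p => (nonCoveringCount m p : ℝ) / (p : ℝ) ^ m).symm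

theorem exp_sum_log_one_sub_inv_eq_prod (n m : ℕ) :
    Real.exp (-(m * ∑ p ∈ n.primesLE, -Real.log (1 - (p : ℝ)⁻¹))) =
      ∏ p ∈ n.primesLE, (1 - (p : ℝ)⁻¹) ^ m := by
  rw [Finset.mul_sum, ← Finset.sum_neg_distrib, Real.exp_sum]
  refine Finset.prod_congr rfl fun p hp => ?_
  have hp2 := Nat.Primes.inv_le_half ⟨p, (Nat.mem_primesLE.1 hp).2⟩
  have hpos : (0 : ℝ) < 1 - (p : ℝ)⁻¹ := by
    simp only at hp2
    linarith
  rw [mul_neg, neg_neg, Real.exp_nat_mul, Real.exp_log hpos]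

theorem natCast_sub_one_pow_div {p : ℕ} (hp : p.Prime) (m : ℕ) :
    (((p - 1) ^ m : ℕ) : ℝ) / (p : ℝ) ^ m = (1 - (p : ℝ)⁻¹) ^ m := by
  have : (p : ℝ) ≠ 0 := by exact_mod_cast hp.ne_zero
  rw [Nat.cast_pow, Nat.cast_sub hp.one_le, ← div_pow, Nat.cast_one, sub_div, div_self this,
    one_div]

theorem exp_le_prod_nonCoveringCount_div (m : ℕ) :
    Real.exp (-(m * ∑ p ∈ m.primesLE, -Real.log (1 - (p : ℝ)⁻¹))) ≤
      ∏ p ∈ m.primesLE, (nonCoveringCount m p : ℝ) / (p : ℝ) ^ m := by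
  rw [exp_sum_log_one_sub_inv_eq_prod]
  refine Finset.prod_le_prod (fun p hp => ?_) fun p hp => ?_
  · have hp' := (Nat.mem_primesLE.1 hp).2
    rw [← natCast_sub_one_pow_div hp']
    positivity
  · have hp' := (Nat.mem_primesLE.1 hp).2
    have : NeZero p := ⟨hp'.ne_zero⟩
    rw [← natCast_sub_one_pow_div hp']
    gcongr
    exact pow_le_nonCoveringCount m p

theorem prod_nonCoveringCount_div_le_exp {m n : ℕ} (hnm : n ≤ m) :
    ∏ p ∈ m.primesLE, (nonCoveringCount m p : ℝ) / (p : ℝ) ^ m ≤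
      Real.exp (Chebyshev.theta n - m * ∑ p ∈ n.primesLE, -Real.log (1 - (p : ℝ)⁻¹)) := by
  have hexp : Real.exp (Chebyshev.theta n - m * ∑ p ∈ n.primesLE, -Real.log (1 - (p : ℝ)⁻¹)) =
      ∏ p ∈ n.primesLE, (p : ℝ) * (1 - (p : ℝ)⁻¹) ^ m := by
    rw [sub_eq_add_neg, Real.exp_add, exp_sum_log_one_sub_inv_eq_prod,
      Chebyshev.theta_eq_sum_primesLE_log, Real.exp_sum, Finset.prod_mul_distrib]
    congr 1
    refine Finset.prod_congr rfl fun p hp => Real.exp_log ?_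
    exact_mod_cast (Nat.mem_primesLE.1 hp).2.pos
  rw [hexp]
  rw [← Finset.prod_sdiff (Nat.primesLE_mono hnm)]
  refine (mul_le_of_le_one_left (Finset.prod_nonneg fun p _ => by positivity)
    (Finset.prod_le_one (fun p _ => by positivity) fun p hp => ?_)).trans
    (Finset.prod_le_prod (fun p _ => by positivity) fun p hp => ?_)
  · have hp' := (Nat.mem_primesLE.1 (Finset.mem_sdiff.1 hp).1).2
    have : NeZero p := ⟨hp'.ne_zero⟩
    refine div_le_one_of_le₀ ?_ (by positivity)
    exact_mod_cast nonCoveringCount_le_pow m p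
  · have hp' := (Nat.mem_primesLE.1 hp).2
    have : NeZero p := ⟨hp'.ne_zero⟩
    rw [← natCast_sub_one_pow_div hp', ← mul_div_assoc]
    gcongr
    exact_mod_cast nonCoveringCount_le_mul_pow m p

theorem exp_mul_log_pow_eq {c : ℝ} {m : ℕ} (hm : 0 < Real.log m) :
    (Real.exp c * Real.log m) ^ m = Real.exp (m * (c + Real.log (Real.log m))) := by
  rw [Real.exp_nat_mul, Real.exp_add, Real.exp_log hm]

theorem one_lt_log_of_three_le {m : ℕ} (hm : 3 ≤ m) : 1 < Real.log m := by
  rw [Real.lt_log_iff_exp_lt (by positivity)]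
  have : (3 : ℝ) ≤ m := by exact_mod_cast hm
  linarith [Real.exp_one_lt_three]

/-- The threshold `⌈m / log m⌉`, together with the estimates it satisfies. -/
theorem exists_le_two_mul_div_log {m : ℕ} (hm : 3 ≤ m) :
    ∃ n : ℕ, 2 ≤ n ∧ n ≤ m ∧ (n : ℝ) ≤ 2 * m / Real.log m ∧
      Real.log m / 2 ≤ Real.log n ∧
      Real.log (Real.log m) - Real.log (Real.log n) ≤
        2 * Real.log (Real.log m) / Real.log m := by
  have hl := one_lt_log_of_three_le hm
  have hl0 : 0 < Real.log m := by linarith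
  have hm0 : (0 : ℝ) < m := by positivity
  have hlm : Real.log m < m - 1 :=
    Real.log_lt_sub_one_of_pos hm0 (by exact_mod_cast (by lia : m ≠ 1))
  have hdiv1 : 1 < m / Real.log m := by rw [lt_div_iff₀ hl0]; linarith
  have hceil := Nat.ceil_lt_add_one (zero_le_one.trans hdiv1.le)
  set n := ⌈(m : ℝ) / Real.log m⌉₊ with hn
  have hle : (m : ℝ) / Real.log m ≤ n := Nat.le_ceil _
  have hnm : n ≤ m := Nat.ceil_le.2 (div_le_self hm0.le hl.le)
  have hn1 : 1 < n := by exact_mod_cast hdiv1.trans_le hle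
  have hlog : Real.log m - Real.log (Real.log m) ≤ Real.log n := by
    rw [← Real.log_div hm0.ne' hl0.ne']
    exact Real.log_le_log (by linarith) hle
  have hhalf : Real.log (Real.log m) ≤ Real.log m / 2 := by
    have h1 := Real.log_le_sub_one_of_pos (half_pos hl0)
    rw [Real.log_div hl0.ne' two_ne_zero] at h1
    linarith [Real.log_two_lt_d9]
  have hlog2 : Real.log m / 2 ≤ Real.log n := by linarith
  have hln : 0 < Real.log n := by linarith
  refine ⟨n, hn1, hnm, ?_, hlog2, ?_⟩
  · rw [mul_div_assoc]; linarith
  · have h1 := Real.log_le_sub_one_of_pos (div_pos hl0 hln)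
    rw [Real.log_div hl0.ne' hln.ne'] at h1
    refine h1.trans ?_
    have hll : 0 ≤ Real.log (Real.log m) := Real.log_nonneg hl.le
    calc Real.log m / Real.log n - 1 = (Real.log m - Real.log n) / Real.log n := by
          field_simp
      _ ≤ Real.log (Real.log m) / Real.log n := by gcongr; linarith
      _ ≤ Real.log (Real.log m) / (Real.log m / 2) := by gcongr
      _ = _ := by field_simp

theorem stmt_16 :
    (∀ m : ℕ, 1 ≤ m →
      ∃ L : ℝ, Filter.Tendsto (fun N : ℕ => (admCount m N : ℝ) / (N : ℝ) ^ m)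
        Filter.atTop (nhds L)) ∧
    ∃ C : ℝ, 0 < C ∧ ∀ m : ℕ, 3 ≤ m → ∀ L : ℝ,
      Filter.Tendsto (fun N : ℕ => (admCount m N : ℝ) / (N : ℝ) ^ m)
        Filter.atTop (nhds L) →
      Real.exp (-(C * m * Real.log (Real.log m) / Real.log m)) ≤
          L * (Real.exp Real.eulerMascheroniConstant * Real.log m) ^ m ∧
        L * (Real.exp Real.eulerMascheroniConstant * Real.log m) ^ m ≤
          Real.exp (C * m * Real.log (Real.log m) / Real.log m) := by
  refine ⟨fun m _ => ⟨_, tendsto_admCount_div_pow m⟩, ?_⟩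
  obtain ⟨K, hK⟩ := exists_abs_sum_neg_log_one_sub_inv_le
  set c₀ := Real.log (Real.log 3) with hc₀
  have h3 : 1 < Real.log 3 := by exact_mod_cast one_lt_log_of_three_le le_rfl
  have hc₀pos : 0 < c₀ := Real.log_pos h3
  have hlog4 : 0 < Real.log 4 := Real.log_pos (by norm_num)
  set D := 2 * Real.log 4 + 2 * |K| with hD
  have hDpos : 0 < D := by positivity
  refine ⟨D / c₀ + 2, by positivity, fun m hm L hL => ?_⟩
  obtain rfl := tendsto_nhds_unique hL (tendsto_admCount_div_pow m)
  have hl := one_lt_log_of_three_le hm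
  have hl0 : 0 < Real.log m := by linarith
  have hm0 : (0 : ℝ) < m := by positivity
  have hll : c₀ ≤ Real.log (Real.log m) :=
    Real.log_le_log (by linarith) (Real.log_le_log (by norm_num) (by exact_mod_cast hm))
  -- all error terms are absorbed into `m log log m / log m`
  have habsorb : D * m / Real.log m + 2 * m * Real.log (Real.log m) / Real.log m ≤
      (D / c₀ + 2) * m * Real.log (Real.log m) / Real.log m := by
    rw [← add_div]
    gcongr
    have : D * m ≤ D / c₀ * m * Real.log (Real.log m) := by
      calc D * m = D / c₀ * m * c₀ := by field_simp
        _ ≤ _ := by gcongr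
    linarith
  rw [exp_mul_log_pow_eq hl0]
  constructor
  · refine le_trans ?_ (mul_le_mul_of_nonneg_right (exp_le_prod_nonCoveringCount_div m)
      (Real.exp_pos _).le)
    rw [← Real.exp_add, Real.exp_le_exp]
    have hV := (abs_le.1 (hK m (by lia))).2
    have hKK : K / Real.log m ≤ |K| / Real.log m := by gcongr; exact le_abs_self K
    have h1 := mul_le_mul_of_nonneg_left (hV.trans hKK) hm0.le
    have h2 : m * (|K| / Real.log m) ≤ D * m / Real.log m := by
      rw [← mul_div_assoc, mul_comm (m : ℝ)]
      gcongr
      linarith [abs_nonneg K]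
    have h3 : 0 ≤ 2 * m * Real.log (Real.log m) / Real.log m := by
      have := hc₀pos.le.trans hll
      positivity
    linarith
  · obtain ⟨n, hn2, hnm, hn, hlogn, hloglog⟩ := exists_le_two_mul_div_log hm
    refine (mul_le_mul_of_nonneg_right (prod_nonCoveringCount_div_le_exp hnm)
      (Real.exp_pos _).le).trans ?_
    rw [← Real.exp_add, Real.exp_le_exp]
    have hθ : Chebyshev.theta n ≤ Real.log 4 * (2 * m / Real.log m) :=
      (Chebyshev.theta_le_log4_mul_x n.cast_nonneg).trans (by gcongr)
    have hV := (abs_le.1 (hK n hn2)).1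
    have hKK : K / Real.log n ≤ 2 * |K| / Real.log m := by
      calc K / Real.log n ≤ |K| / Real.log n := by gcongr; exact le_abs_self K
        _ ≤ |K| / (Real.log m / 2) := by gcongr
        _ = _ := by field_simp
    have h1 := mul_le_mul_of_nonneg_left (a := (m : ℝ)) (add_le_add hloglog
      ((neg_le.1 hV).trans hKK)) hm0.le
    have h2 : Real.log 4 * (2 * m / Real.log m) + m * (2 * Real.log (Real.log m) / Real.log m +
        2 * |K| / Real.log m) =
        D * m / Real.log m + 2 * m * Real.log (Real.log m) / Real.log m := by
      rw [hD]; ring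
    linarith
end

section
/- For every integer m ≥ 1, the limit ρ_ad(m) = lim_{N→∞} #{(h_1,…,h_m) ∈ {1,…,N}^m : (h_1,…,h_m) is admissible} / N^m exists and equals ∏_{p ≤ m, p prime} ρ_ad(m,p), where ρ_ad(m,p) = p^{−m} · #{(h_1,…,h_m) ∈ (ℤ/pℤ)^m : {h_1,…,h_m} ≠ ℤ/pℤ}. -/
open Filter

/-- `ρ_ad(m, p)`: the proportion of `m`-tuples in `(ℤ/pℤ)^m` that do not cover all
residue classes mod `p`. -/
noncomputable def rhoAdP (m p : ℕ) : ℝ :=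
  (Nat.card {h : Fin m → ZMod p // ¬ Function.Surjective h} : ℝ) / (p : ℝ) ^ m

/-- The number of integers in `{1, …, N}` in a fixed residue class mod `M` is within `1`
of `N / M`. -/
lemma abs_card_residueClass_sub_le (M : ℕ) (hM : 0 < M) (a : ZMod M) (N : ℕ) :
    |(((Finset.Icc (1 : ℤ) N).filter (fun x : ℤ => (x : ZMod M) = a)).card : ℝ) - N / M| ≤ 1 := by
  obtain ⟨v, rfl⟩ := ZMod.intCast_surjective a
  have hMz : (0 : ℤ) < M := by exact_mod_cast hM
  have hset : (Finset.Icc (1 : ℤ) N).filter (fun x : ℤ => (x : ZMod M) = v)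
      = (Finset.Ioc (0 : ℤ) N).filter (fun x : ℤ => x ≡ v [ZMOD M]) := by
    ext x
    simp only [Finset.mem_filter, Finset.mem_Icc, Finset.mem_Ioc, ZMod.intCast_eq_intCast_iff]
    constructor <;> rintro ⟨⟨h1, h2⟩, h3⟩ <;> exact ⟨⟨by omega, h2⟩, h3⟩
  have hcard := Int.Ioc_filter_modEq_card (0 : ℤ) N hMz v
  rw [← hset] at hcard
  set A := ⌊((N : ℤ) - v : ℚ) / (M : ℤ)⌋ with hA
  set B := ⌊((0 : ℤ) - v : ℚ) / (M : ℤ)⌋ with hB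
  have hBA : B ≤ A := by
    apply Int.floor_le_floor
    have : (0 : ℚ) < M := by exact_mod_cast hM
    push_cast
    gcongr
    positivity
  rw [max_eq_left (by omega)] at hcard
  have hAr : A = ⌊((N : ℝ) - v) / M⌋ := by
    rw [hA, ← Rat.floor_cast (α := ℝ)]; push_cast; rfl
  have hBr : B = ⌊(0 - v : ℝ) / M⌋ := by
    rw [hB, ← Rat.floor_cast (α := ℝ)]; push_cast; rfl
  have hcr : (((Finset.Icc (1 : ℤ) N).filter (fun x : ℤ => (x : ZMod M) = v)).card : ℝ)
      = (A : ℝ) - B := by exact_mod_cast hcard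
  rw [hcr, hAr, hBr]
  have h1 := Int.floor_le (((N : ℝ) - v) / M)
  have h2 := Int.lt_floor_add_one (((N : ℝ) - v) / M)
  have h3 := Int.floor_le ((0 - v : ℝ) / M)
  have h4 := Int.lt_floor_add_one ((0 - v : ℝ) / M)
  rw [sub_div] at h1 h2 h3 h4
  rw [sub_div, sub_div, abs_le]
  constructor <;> linarith [zero_div (M : ℝ)]

/-- Every residue class mod `M` has natural density `1 / M`. -/
lemma tendsto_card_residueClass_div (M : ℕ) (hM : 0 < M) (a : ZMod M) :
    Tendsto (fun N : ℕ =>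
      (((Finset.Icc (1 : ℤ) N).filter (fun x : ℤ => (x : ZMod M) = a)).card : ℝ) / N)
      atTop (nhds (1 / M)) := by
  rw [tendsto_iff_norm_sub_tendsto_zero]
  refine squeeze_zero' (Eventually.of_forall fun _ => norm_nonneg _) ?_
    tendsto_one_div_atTop_nhds_zero_nat
  filter_upwards [eventually_gt_atTop 0] with N hN
  have hNr : (0 : ℝ) < N := by exact_mod_cast hN
  have hMr : (0 : ℝ) < M := by exact_mod_cast hM
  have h := abs_card_residueClass_sub_le M hM a N
  rw [Real.norm_eq_abs, le_div_iff₀ hNr]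
  calc _ = |((((Finset.Icc (1 : ℤ) N).filter (fun x : ℤ => (x : ZMod M) = a)).card : ℝ) / N
          - 1 / M) * N| := by rw [abs_mul, abs_of_pos hNr]
    _ ≤ 1 := by convert h using 2; field_simp

open Classical in
/-- A condition on `m`-tuples of integers depending only on their residues mod `M` has a
natural density, namely the proportion of tuples of residues satisfying it. -/
lemma tendsto_card_residueTuple_div (m M : ℕ) (hM : 0 < M) (S : (Fin m → ZMod M) → Prop) :
    Tendsto (fun N : ℕ =>
      (Nat.card {h : Fin m → ℤ // (∀ i, 1 ≤ h i ∧ h i ≤ (N : ℤ)) ∧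
        S (fun i => (h i : ZMod M))} : ℝ) / (N : ℝ) ^ m)
      atTop (nhds ((Nat.card {s // S s} : ℝ) / (M : ℝ) ^ m)) := by
  have : NeZero M := ⟨hM.ne'⟩
  have hcount (N : ℕ) : Nat.card {h : Fin m → ℤ // (∀ i, 1 ≤ h i ∧ h i ≤ (N : ℤ)) ∧
        S (fun i => (h i : ZMod M))} = ∑ s ∈ Finset.univ.filter S, ∏ i,
          ((Finset.Icc (1 : ℤ) N).filter (fun x : ℤ => (x : ZMod M) = s i)).card := by
    rw [Nat.subtype_card ((Fintype.piFinset fun _ : Fin m => Finset.Icc (1 : ℤ) N).filter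
      fun h => S (fun i => (h i : ZMod M))) (by simp),
      Finset.card_eq_sum_card_fiberwise (f := fun h i => ((h i : ℤ) : ZMod M))
        (t := Finset.univ.filter S) (by intro h; simp)]
    refine Finset.sum_congr rfl fun s hs => ?_
    rw [← Fintype.card_piFinset]
    congr 1
    ext h
    simp only [Finset.mem_filter, Fintype.mem_piFinset, Finset.mem_univ, true_and] at hs ⊢
    constructor
    · rintro ⟨⟨h1, -⟩, rfl⟩
      exact fun i => ⟨h1 i, rfl⟩
    · intro h1
      have h2 : (fun i => (h i : ZMod M)) = s := funext fun i => (h1 i).2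
      exact ⟨⟨fun i => (h1 i).1, h2 ▸ hs⟩, h2⟩
  have hlim : Tendsto (fun N : ℕ => ∑ s ∈ Finset.univ.filter S, ∏ i,
      ((((Finset.Icc (1 : ℤ) N).filter (fun x : ℤ => (x : ZMod M) = s i)).card : ℝ) / N))
      atTop (nhds (∑ s ∈ Finset.univ.filter S, ∏ _i : Fin m, (1 / M : ℝ))) :=
    tendsto_finsetSum _ fun s _ => tendsto_finsetProd _ fun i _ =>
      tendsto_card_residueClass_div M hM (s i)
  convert hlim using 2 with N
  · rw [hcount]
    push_cast
    simp [Finset.sum_div, Finset.prod_div_distrib]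
  · rw [Nat.subtype_card (Finset.univ.filter S) (by simp)]
    simp [div_eq_mul_inv]

/-- Only primes `p ≤ m` matter for the admissibility of an `m`-tuple. -/
lemma admissibleTuple_iff_forall_le {m : ℕ} (x : Fin m → ℤ) :
    AdmissibleTuple x ↔ ∀ p ∈ Finset.filter Nat.Prime (Finset.range (m + 1)),
      ¬ Function.Surjective (fun i => (x i : ZMod p)) := by
  simp only [Function.Surjective, not_forall, not_exists, Finset.mem_filter, Finset.mem_range]
  refine ⟨fun h p hp => h p hp.2, fun h p hp => ?_⟩
  by_cases hpm : p < m + 1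
  · exact h p ⟨hpm, hp⟩
  by_contra! hsurj
  have : NeZero p := ⟨hp.ne_zero⟩
  have := Fintype.card_le_of_surjective (fun i => (x i : ZMod p)) hsurj
  rw [ZMod.card, Fintype.card_fin] at this
  omega

/-- By the Chinese remainder theorem, conditions on tuples of residues modulo pairwise coprime
moduli are independent. -/
lemma card_residueTuple_prod {ι : Type*} [Fintype ι] (m : ℕ) (q : ι → ℕ)
    (hq : Pairwise (Function.onFun Nat.Coprime q)) (T : (j : ι) → (Fin m → ZMod (q j)) → Prop) :
    Nat.card {s : Fin m → ZMod (∏ j, q j) //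
        ∀ j, T j (fun i => ZMod.prodEquivPi q hq (s i) j)}
      = ∏ j, Nat.card {t // T j t} := by
  rw [← Nat.card_pi]
  refine Nat.card_congr (Equiv.trans (Equiv.subtypeEquiv
    ((Equiv.piCongrRight fun _ => (ZMod.prodEquivPi q hq).toEquiv).trans
      (Equiv.piComm fun _ j => ZMod (q j))) fun s => ?_)
    (Equiv.subtypePiEquivPi (p := fun j => T j)))
  rfl

theorem stmt_17 (m : ℕ) (hm : 1 ≤ m) :
    Filter.Tendsto (fun N : ℕ => (admCount m N : ℝ) / (N : ℝ) ^ m) Filter.atTop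
      (nhds (∏ p ∈ Finset.filter Nat.Prime (Finset.range (m + 1)), rhoAdP m p)) := by
  set P := Finset.filter Nat.Prime (Finset.range (m + 1))
  have hprime (p : P) : (p : ℕ).Prime := (Finset.mem_filter.mp p.2).2
  let q : P → ℕ := fun p => p
  have hq : Pairwise (Function.onFun Nat.Coprime q) := fun p p' hne =>
    (Nat.coprime_primes (hprime p) (hprime p')).mpr fun h => hne (Subtype.ext h)
  have hM : 0 < ∏ p, q p := Finset.prod_pos fun p _ => (hprime p).pos
  have hadm (x : Fin m → ℤ) : AdmissibleTuple x ↔ ∀ p : P, ¬ Function.Surjective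
      (fun i => ZMod.prodEquivPi q hq (x i : ZMod (∏ p, q p)) p) := by
    rw [admissibleTuple_iff_forall_le, Subtype.forall]
    simp only [map_intCast, Pi.intCast_apply]
    rfl
  have hlim := tendsto_card_residueTuple_div m (∏ p, q p) hM
    (fun s => ∀ p : P, ¬ Function.Surjective (fun i => ZMod.prodEquivPi q hq (s i) p))
  rw [card_residueTuple_prod m q hq (fun p t => ¬ Function.Surjective t)] at hlim
  convert hlim using 2
  · simp only [admCount, hadm]
  · rw [← Finset.prod_coe_sort]
    push_cast
    rw [← Finset.prod_pow, ← Finset.prod_div_distrib]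
    rfl
end

section
/- There is an absolute constant C > 0 such that for every integer m ≥ 3 and every prime p ≤ m / log m, |ρ_ad(m,p) / (p · (1 − 1/p)^m) − 1| ≤ C / log m, where ρ_ad(m,p) = p^{−m} · #{(h_1,…,h_m) ∈ (ℤ/pℤ)^m : {h_1,…,h_m} ≠ ℤ/pℤ}. -/
section Counting

variable {ι α : Type*} [Fintype ι] [DecidableEq ι] [Fintype α] [DecidableEq α]

/-- The number of maps `ι → α` avoiding `s`, written as a sum of indicators. -/
theorem sum_ite_forall_notMem (s : Finset α) :
    ∑ h : ι → α, (if ∀ i, h i ∉ s then (1 : ℝ) else 0) =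
      ((Fintype.card α : ℝ) - s.card) ^ Fintype.card ι := by
  have hs : Finset.univ.filter (fun h : ι → α => ∀ i, h i ∉ s) =
      Fintype.piFinset fun _ => sᶜ := by
    ext h
    simp
  rw [Finset.sum_boole, hs, Fintype.card_piFinset, Finset.prod_const, Finset.card_univ,
    Finset.card_compl, Nat.cast_pow, Nat.cast_sub s.card_le_univ]

/-- The number of values missed by `h`. -/
noncomputable def missedCount (h : ι → α) : ℝ :=
  ∑ a, if ∀ i, h i ≠ a then 1 else 0

theorem sum_missedCount :
    ∑ h : ι → α, missedCount h =
      Fintype.card α * ((Fintype.card α : ℝ) - 1) ^ Fintype.card ι := by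
  simp only [missedCount]
  rw [Finset.sum_comm]
  have (a : α) := sum_ite_forall_notMem (ι := ι) {a}
  simp only [Finset.mem_singleton, Finset.card_singleton, Nat.cast_one] at this
  simp [this]

theorem sum_missedCount_sq :
    ∑ h : ι → α, missedCount h ^ 2 =
      Fintype.card α * ((Fintype.card α : ℝ) - 1) ^ Fintype.card ι +
      Fintype.card α * ((Fintype.card α : ℝ) - 1) *
        ((Fintype.card α : ℝ) - 2) ^ Fintype.card ι := by
  have key (a b : α) :
      ∑ h : ι → α, ((if ∀ i, h i ≠ a then (1 : ℝ) else 0) * if ∀ i, h i ≠ b then 1 else 0) =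
        (if a = b then ((Fintype.card α : ℝ) - 1) ^ Fintype.card ι -
          ((Fintype.card α : ℝ) - 2) ^ Fintype.card ι else 0) +
          ((Fintype.card α : ℝ) - 2) ^ Fintype.card ι := by
    have h1 := sum_ite_forall_notMem (ι := ι) {a, b}
    simp only [Finset.mem_insert, Finset.mem_singleton, not_or, forall_and] at h1
    simp only [ite_zero_mul_ite_zero, mul_one, ne_eq]
    rw [h1]
    by_cases hab : a = b
    · simp [hab]
    · simp [hab, Finset.card_pair hab]
  simp only [missedCount, sq, Finset.sum_mul_sum]
  rw [Finset.sum_comm]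
  have (a : α) := Finset.sum_comm (s := (Finset.univ : Finset (ι → α))) (t := Finset.univ)
    (f := fun h b => (if ∀ i, h i ≠ a then (1 : ℝ) else 0) * if ∀ i, h i ≠ b then 1 else 0)
  simp only [this, key, Finset.sum_add_distrib, Finset.sum_ite_eq, Finset.mem_univ, if_true,
    Finset.sum_const, Finset.card_univ, nsmul_eq_mul]
  ring

open Classical in
theorem natCard_not_surjective :
    (Nat.card {h : ι → α // ¬ Function.Surjective h} : ℝ) =
      ∑ h : ι → α, if ¬ Function.Surjective h then 1 else 0 := by
  rw [Nat.card_eq_fintype_card, Fintype.card_subtype, Finset.sum_boole]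

theorem natCard_not_surjective_le :
    (Nat.card {h : ι → α // ¬ Function.Surjective h} : ℝ) ≤
      Fintype.card α * ((Fintype.card α : ℝ) - 1) ^ Fintype.card ι := by
  classical
  rw [natCard_not_surjective, ← sum_missedCount]
  refine Finset.sum_le_sum fun h _ => ?_
  rw [missedCount, Finset.sum_boole]
  split_ifs with hs
  · positivity
  · simp only [Function.Surjective, not_forall, not_exists] at hs
    obtain ⟨a, ha⟩ := hs
    have : 0 < (Finset.univ.filter fun a => ∀ i, h i ≠ a).card :=
      Finset.card_pos.2 ⟨a, by simpa using ha⟩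
    exact_mod_cast this

/-- A Bonferroni-type lower bound for the number of non-surjective maps. -/
theorem le_natCard_not_surjective :
    Fintype.card α * ((Fintype.card α : ℝ) - 1) ^ Fintype.card ι -
      Fintype.card α * ((Fintype.card α : ℝ) - 1) *
        ((Fintype.card α : ℝ) - 2) ^ Fintype.card ι ≤
      (Nat.card {h : ι → α // ¬ Function.Surjective h} : ℝ) := by
  classical
  have hsum : ∑ h : ι → α, (2 * missedCount h - missedCount h ^ 2) ≤
      (Nat.card {h : ι → α // ¬ Function.Surjective h} : ℝ) := by
    rw [natCard_not_surjective]
    refine Finset.sum_le_sum fun h _ => ?_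
    split_ifs with hs
    · have h0 : missedCount h = 0 := by
        refine Finset.sum_eq_zero fun a _ => if_neg fun ha => ?_
        obtain ⟨i, hi⟩ := hs a
        exact ha i hi
      simp [h0]
    · nlinarith [sq_nonneg (missedCount h - 1)]
  rw [Finset.sum_sub_distrib, ← Finset.mul_sum, sum_missedCount, sum_missedCount_sq] at hsum
  linarith

end Counting

/-- In the range `p ≤ m / log m`, the second Bonferroni term is smaller than the first one by a
factor `m / p`. -/
theorem sub_two_pow_le {m p : ℕ} (hm : 3 ≤ m) (hp : 2 ≤ p)
    (hpm : (p : ℝ) ≤ m / Real.log m) :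
    ((p : ℝ) - 2) ^ m ≤ ((p : ℝ) - 1) ^ m / m := by
  have hm' : (3 : ℝ) ≤ m := by exact_mod_cast hm
  have hp' : (2 : ℝ) ≤ p := by exact_mod_cast hp
  have hlog : 0 < Real.log m := Real.log_pos (by linarith)
  have hq : 0 < (p : ℝ) - 1 := by linarith
  have hbase : (p : ℝ) - 2 ≤ (p - 1) * Real.exp (-(1 / (p - 1))) := by
    have h1 := Real.add_one_le_exp (-(1 / ((p : ℝ) - 1)))
    calc (p : ℝ) - 2 = (p - 1) * (-(1 / (p - 1)) + 1) := by field_simp; ring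
      _ ≤ _ := by gcongr
  have hexp : Real.exp (-(1 / ((p : ℝ) - 1))) ^ m ≤ 1 / m := by
    rw [← Real.exp_nat_mul, one_div (m : ℝ),
      ← Real.exp_log (show (0 : ℝ) < (m : ℝ)⁻¹ by positivity), Real.exp_le_exp, Real.log_inv, mul_neg, neg_le_neg_iff, mul_one_div, le_div_iff₀ hq]
    rw [le_div_iff₀ hlog] at hpm
    nlinarith
  calc ((p : ℝ) - 2) ^ m ≤ ((p - 1) * Real.exp (-(1 / (p - 1)))) ^ m :=
        pow_le_pow_left₀ (by linarith) hbase m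
    _ = (p - 1) ^ m * Real.exp (-(1 / ((p : ℝ) - 1))) ^ m := mul_pow _ _ _
    _ ≤ (p - 1) ^ m * (1 / m) := by gcongr
    _ = _ := by ring

theorem stmt_18 : ∃ C : ℝ, 0 < C ∧ ∀ m p : ℕ, 3 ≤ m → p.Prime →
    (p : ℝ) ≤ m / Real.log m →
    |rhoAdP m p / ((p : ℝ) * (1 - 1 / (p : ℝ)) ^ m) - 1| ≤ C / Real.log m := by
  refine ⟨1, one_pos, fun m p hm hp hpm => ?_⟩
  have : NeZero p := ⟨hp.ne_zero⟩
  have hm' : (3 : ℝ) ≤ m := by exact_mod_cast hm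
  have hp' : (2 : ℝ) ≤ p := by exact_mod_cast hp.two_le
  have hlog : 0 < Real.log m := Real.log_pos (by linarith)
  have hq : 0 < (p : ℝ) - 1 := by linarith
  have hupper := natCard_not_surjective_le (ι := Fin m) (α := ZMod p)
  have hlower := le_natCard_not_surjective (ι := Fin m) (α := ZMod p)
  have htwo := sub_two_pow_le hm hp.two_le hpm
  simp only [ZMod.card, Fintype.card_fin] at hupper hlower
  rw [rhoAdP]
  set N : ℝ := (Nat.card {h : Fin m → ZMod p // ¬ Function.Surjective h} : ℝ)
  have hD : 0 < (p : ℝ) * (p - 1) ^ m := by positivity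
  have hratio : N / (p : ℝ) ^ m / (p * (1 - 1 / (p : ℝ)) ^ m) = N / (p * (p - 1) ^ m) := by
    rw [one_sub_div (by positivity), div_pow]
    field_simp
  have hle : ((p : ℝ) - 1) / m ≤ 1 / Real.log m := by
    rw [le_div_iff₀ hlog] at hpm
    rw [div_le_div_iff₀ (by linarith) hlog]
    nlinarith
  have hN : (p * (p - 1) ^ m) * (1 - ((p : ℝ) - 1) / m) ≤ N := by
    have := mul_le_mul_of_nonneg_left htwo (show 0 ≤ (p : ℝ) * (p - 1) by positivity)
    refine le_trans (le_of_eq ?_) ((sub_le_sub_left this _).trans hlower)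
    ring
  have h1 : N / (p * (p - 1) ^ m) ≤ 1 := (div_le_one hD).2 hupper
  have h2 : 1 - ((p : ℝ) - 1) / m ≤ N / (p * (p - 1) ^ m) := by
    rwa [le_div_iff₀ hD, mul_comm]
  rw [hratio, abs_le]
  constructor
  · linarith
  · have : 0 < 1 / Real.log m := by positivity
    linarith
end

section
/- There is an absolute constant C > 0 such that for every integer m ≥ 1 and every integer k with m ≤ k ≤ e^{4m}, one has δ(m,k) ≥ e^{−C m²}. -/
open Filter Real

/-- An `(m,k)`-plausible set: translation invariant, permutation invariant, and
every admissible `k`-tuple of distinct integers contains an `m`-subtuple lying in `A`. -/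
def Plausible (m k : ℕ) (A : Set (Fin m → ℤ)) : Prop :=
  (∀ h ∈ A, ∀ t : ℤ, (fun i => h i + t) ∈ A) ∧
  (∀ h ∈ A, ∀ σ : Equiv.Perm (Fin m), (h ∘ σ) ∈ A) ∧
  (∀ x : Fin k → ℤ, Function.Injective x → AdmissibleTuple x →
    ∃ f : Fin m → Fin k, Function.Injective f ∧ (x ∘ f) ∈ A)

/-- The number of points of `A` in the box `[-N, N]^m`. -/
noncomputable def boxCount (m : ℕ) (A : Set (Fin m → ℤ)) (N : ℕ) : ℕ :=
  Nat.card {h : Fin m → ℤ // h ∈ A ∧ ∀ i, |h i| ≤ (N : ℤ)}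

/-- The liminf density of `A ⊆ ℤ^m` in boxes `[-N, N]^m`. -/
noncomputable def lowerBoxDensity (m : ℕ) (A : Set (Fin m → ℤ)) : ℝ :=
  Filter.liminf (fun N : ℕ => (boxCount m A N : ℝ) / (2 * N) ^ m) Filter.atTop

/-- `δ(m,k)`: the infimum over `(m,k)`-plausible sets `A` of the liminf density of `A`. -/
noncomputable def delta (m k : ℕ) : ℝ :=
  sInf { d : ℝ | ∃ A : Set (Fin m → ℤ), Plausible m k A ∧ d = lowerBoxDensity m A }

/-- Elementary Mertens-type bound: the integers coprime to `k!` have density at least `1 / k`. -/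
theorem factorial_le_mul_totient_factorial (k : ℕ) (hk : 1 ≤ k) :
    k.factorial ≤ k * Nat.totient k.factorial := by
  induction k, hk using Nat.le_induction with
  | base => simp
  | succ n hn ih =>
    have key : n * Nat.totient n.factorial ≤ Nat.totient (n + 1).factorial := by
      rw [Nat.factorial_succ]
      by_cases hp : (n + 1).Prime
      · have hnd : ¬ (n + 1) ∣ n.factorial := by
          rw [hp.dvd_factorial]; omega
        rw [Nat.totient_mul_of_prime_of_not_dvd hp hnd]
        simp
      · have hfac : ((n + 1) * n.factorial).primeFactors = n.factorial.primeFactors := by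
          ext p
          rw [← Nat.factorial_succ]
          simp only [Nat.mem_primeFactors, ne_eq, Nat.factorial_ne_zero, not_false_eq_true,
            and_true]
          refine and_congr_right fun hpp => ?_
          rw [hpp.dvd_factorial, hpp.dvd_factorial]
          refine ⟨fun h => ?_, fun h => by omega⟩
          rcases Nat.lt_or_ge n p with h' | h'
          · exact absurd (by rwa [show n + 1 = p by omega]) hp
          · exact h'
        have heq : Nat.totient ((n + 1) * n.factorial) = (n + 1) * Nat.totient n.factorial := by
          have : (Nat.totient ((n + 1) * n.factorial) : ℚ)
              = ((n + 1) * Nat.totient n.factorial : ℕ) := by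
            rw [Nat.totient_eq_mul_prod_factors, hfac, Nat.cast_mul (n + 1) (Nat.totient _),
              Nat.totient_eq_mul_prod_factors n.factorial]
            push_cast
            ring
          exact_mod_cast this
        rw [heq]
        exact Nat.mul_le_mul_right _ (by omega)
    calc (n + 1).factorial = (n + 1) * n.factorial := Nat.factorial_succ n
      _ ≤ (n + 1) * (n * Nat.totient n.factorial) := Nat.mul_le_mul_left _ ih
      _ ≤ _ := Nat.mul_le_mul_left _ key

/-- A `k`-tuple of integers coprime to `k!` is admissible. -/
theorem admissibleTuple_of_coprime_factorial {k : ℕ} (x : Fin k → ℕ)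
    (hx : ∀ i, Nat.Coprime k.factorial (x i)) : AdmissibleTuple (fun i => (x i : ℤ)) := by
  intro p hp
  have : Fact p.Prime := ⟨hp⟩
  rcases Nat.lt_or_ge k p with h | h
  · by_contra! hc
    have hs : Function.Surjective (fun i => ((x i : ℤ) : ZMod p)) := hc
    have := Fintype.card_le_of_surjective _ hs
    simp [ZMod.card] at this
    omega
  · refine ⟨0, fun i h0 => ?_⟩
    rw [Int.cast_natCast, ZMod.natCast_eq_zero_iff] at h0
    exact Nat.not_coprime_of_dvd_of_dvd hp.one_lt (hp.dvd_factorial.2 h) h0 (hx i)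

theorem finite_box (m N : ℕ) (A : Set (Fin m → ℤ)) :
    Finite {h : Fin m → ℤ // h ∈ A ∧ ∀ i, |h i| ≤ (N : ℤ)} := by
  refine Set.Finite.to_subtype (s := {h | h ∈ A ∧ ∀ i, |h i| ≤ (N : ℤ)})
    ((Set.Finite.pi' fun _ => Set.finite_Icc (-(N : ℤ)) N).subset ?_)
  exact fun h hh i => abs_le.1 (hh.2 i)

theorem boxCount_le (m N : ℕ) (A : Set (Fin m → ℤ)) : boxCount m A N ≤ (2 * N + 1) ^ m := by
  have hinj : Function.Injective
      (fun (h : {h : Fin m → ℤ // h ∈ A ∧ ∀ i, |h i| ≤ (N : ℤ)}) (i : Fin m) =>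
        (⟨h.1 i, Finset.mem_Icc.2 (abs_le.1 (h.2.2 i))⟩ : Finset.Icc (-(N : ℤ)) N)) := by
    intro a b hab
    ext i
    simpa using congrFun hab i
  have := Nat.card_le_card_of_injective _ hinj
  rw [Nat.card_fun, Nat.card_eq_fintype_card (α := Finset.Icc _ _), Fintype.card_coe,
    Int.card_Icc, Nat.card_fin] at this
  rwa [show ((N : ℤ) + 1 - -(N : ℤ)).toNat = 2 * N + 1 by omega] at this

/-- Double counting: if every choice of one element from each of `k` disjoint subsets of `[-N, N]`,
all parametrized by `T`, is admissible, then a plausible set has at least `(|T| / k) ^ m` points in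
the box. -/
theorem card_pow_le_mul_boxCount {m k N : ℕ} {A : Set (Fin m → ℤ)} (hA : Plausible m k A)
    {T : Type} [Fintype T] [Nonempty T] (g : Fin k → T → ℤ)
    (hg : ∀ i t i' t', g i t = g i' t' → i = i' ∧ t = t')
    (hadm : ∀ y : Fin k → T, AdmissibleTuple (fun i => g i (y i)))
    (hN : ∀ i t, |g i t| ≤ (N : ℤ)) (hmk : m ≤ k) :
    Fintype.card T ^ m ≤ k ^ m * boxCount m A N := by
  classical
  have := finite_box m N A
  have hcover : (Finset.univ : Finset (Fin k → T)) ⊆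
      (Finset.univ : Finset (Fin m → Fin k)).biUnion fun f => Finset.univ.filter fun y =>
        Function.Injective f ∧ (fun j => g (f j) (y (f j))) ∈ A := by
    intro y _
    obtain ⟨f, hf, hfA⟩ := hA.2.2 (fun i => g i (y i)) (fun i j h => (hg _ _ _ _ h).1) (hadm y)
    simp only [Finset.mem_biUnion, Finset.mem_univ, true_and, Finset.mem_filter]
    exact ⟨f, hf, hfA⟩
  have hfiber : ∀ f : Fin m → Fin k, (Finset.univ.filter fun y : Fin k → T =>
        Function.Injective f ∧ (fun j => g (f j) (y (f j))) ∈ A).card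
      ≤ boxCount m A N * Fintype.card T ^ (k - m) := by
    intro f
    by_cases hf : Function.Injective f
    · have hinj : Function.Injective
          (fun (y : {y : Fin k → T // Function.Injective f ∧ (fun j => g (f j) (y (f j))) ∈ A}) =>
            ((⟨fun j => g (f j) (y.1 (f j)), y.2.2, fun _ => hN _ _⟩, fun i => y.1 i.1) :
              {h : Fin m → ℤ // h ∈ A ∧ ∀ i, |h i| ≤ (N : ℤ)} ×
                ({i : Fin k // i ∉ Set.range f} → T))) := by
        intro y y' h
        simp only [Prod.mk.injEq, Subtype.mk.injEq] at h
        ext i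
        by_cases hi : i ∈ Set.range f
        · obtain ⟨j, rfl⟩ := hi
          exact (hg _ _ _ _ (congrFun h.1 j)).2
        · exact congrFun h.2 ⟨i, hi⟩
      have hle := Nat.card_le_card_of_injective _ hinj
      rw [Nat.card_prod, Nat.card_fun, Nat.card_eq_fintype_card (α := T)] at hle
      have hc : Nat.card {i : Fin k // i ∉ Set.range f} = k - m := by
        rw [Nat.card_eq_fintype_card, Fintype.card_subtype_compl, Fintype.card_fin]
        congr 1
        rw [← Nat.card_eq_fintype_card]
        exact (Nat.card_range_of_injective hf).trans (by simp)
      rw [hc, Nat.card_eq_fintype_card, Fintype.card_subtype] at hle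
      exact hle
    · simp [hf]
  have h1 : Fintype.card T ^ k ≤ k ^ m * (boxCount m A N * Fintype.card T ^ (k - m)) := by
    calc Fintype.card T ^ k = (Finset.univ : Finset (Fin k → T)).card := by simp
      _ ≤ _ := Finset.card_le_card hcover
      _ ≤ _ := Finset.card_biUnion_le
      _ ≤ ∑ _f : Fin m → Fin k, boxCount m A N * Fintype.card T ^ (k - m) :=
        Finset.sum_le_sum fun f _ => hfiber f
      _ = _ := by simp
  have h2 : Fintype.card T ^ k = Fintype.card T ^ m * Fintype.card T ^ (k - m) := by
    rw [← pow_add]; congr 1; omega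
  rw [h2, ← mul_assoc] at h1
  exact Nat.le_of_mul_le_mul_right h1 (pow_pos Fintype.card_pos _)

theorem totient_mul_pow_le_mul_boxCount {m k N Q : ℕ} {A : Set (Fin m → ℤ)}
    (hA : Plausible m k A) (hmk : m ≤ k) (hQ : 1 ≤ Q) (hN : k.factorial * (k * Q) ≤ N) :
    (Nat.totient k.factorial * Q) ^ m ≤ k ^ m * boxCount m A N := by
  set P := k.factorial with hP
  have hP0 : 0 < P := Nat.factorial_pos k
  let R := (Finset.range P).filter P.Coprime
  have hR : Fintype.card R = Nat.totient P := Fintype.card_coe R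
  have hRpos : 0 < Fintype.card R := hR ▸ Nat.totient_pos.2 hP0
  have : Nonempty R := Fintype.card_pos_iff.1 hRpos
  have : Nonempty (Fin Q) := ⟨⟨0, hQ⟩⟩
  let x : Fin k → R × Fin Q → ℕ := fun i t => t.1.1 + P * (i + k * t.2)
  have hlt : ∀ r : R, r.1 < P := fun r => Finset.mem_range.1 (Finset.mem_filter.1 r.2).1
  have hcop : ∀ i t, P.Coprime (x i t) := fun i t => by
    simpa [x] using (Finset.mem_filter.1 t.1.2).2
  have hinj : ∀ i t i' t', x i t = x i' t' → i = i' ∧ t = t' := by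
    rintro i ⟨r, q⟩ i' ⟨r', q'⟩ h
    have hr : r.1 = r'.1 := by
      have := congrArg (· % P) h
      simpa [x, Nat.mod_eq_of_lt (hlt _)] using this
    have hiq : (i : ℕ) + k * q = i' + k * q' := by
      simp only [x, hr] at h
      exact Nat.eq_of_mul_eq_mul_left hP0 (Nat.add_left_cancel h)
    have hi : (i : ℕ) = i' := by
      have := congrArg (· % k) hiq
      simpa [Nat.mod_eq_of_lt] using this
    have hq : (q : ℕ) = q' := by
      rw [hi] at hiq
      exact Nat.eq_of_mul_eq_mul_left i.pos (Nat.add_left_cancel hiq)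
    exact ⟨Fin.ext hi, Prod.ext (Subtype.ext hr) (Fin.ext hq)⟩
  have hbound : ∀ i t, x i t ≤ N := by
    rintro i ⟨r, q⟩
    have h1 : (i : ℕ) + k * q + 1 ≤ k * Q := by
      have := Nat.mul_le_mul_left k (Nat.succ_le_of_lt q.2)
      have := i.2
      rw [Nat.mul_succ] at *
      omega
    have h2 := Nat.mul_le_mul_left P h1
    have h3 := hlt r
    rw [Nat.mul_succ] at h2
    simp only [x]
    omega
  have := card_pow_le_mul_boxCount (N := N) hA (fun i t => (x i t : ℤ))
    (fun i t i' t' h => hinj i t i' t' (by exact_mod_cast h))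
    (fun y => admissibleTuple_of_coprime_factorial (fun i => x i (y i)) fun i => hcop i (y i))
    (fun i t => by simpa using hbound i t) hmk
  rwa [Fintype.card_prod, hR, Fintype.card_fin] at this

theorem le_boxCount_div {m k N : ℕ} {A : Set (Fin m → ℤ)} (hA : Plausible m k A)
    (hmk : m ≤ k) (hk : 1 ≤ k) (hN : k.factorial * k ≤ N) :
    (1 / (4 * (k : ℝ) ^ 3)) ^ m ≤ (boxCount m A N : ℝ) / (2 * N) ^ m := by
  have hPk : 0 < k.factorial * k := Nat.mul_pos (Nat.factorial_pos k) hk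
  have hN0 : 0 < N := hPk.trans_le hN
  set Q := N / (k.factorial * k) with hQdef
  have hQ : 1 ≤ Q := (Nat.one_le_div_iff hPk).2 hN
  have hQN : k.factorial * (k * Q) ≤ N := by
    rw [← mul_assoc]; exact Nat.mul_div_le N _
  have hmain := totient_mul_pow_le_mul_boxCount hA hmk hQ hQN
  have hNQ : N ≤ 2 * (k.factorial * k * Q) := by
    have h1 := Nat.lt_mul_div_succ N hPk
    have h2 : k.factorial * k * 1 ≤ k.factorial * k * Q := Nat.mul_le_mul_left _ hQ
    rw [← hQdef, Nat.mul_succ] at h1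
    omega
  have hs : N ≤ 2 * k ^ 2 * (Nat.totient k.factorial * Q) := by
    calc N ≤ 2 * (k.factorial * k * Q) := hNQ
      _ ≤ 2 * (k * Nat.totient k.factorial * k * Q) := by
        gcongr; exact factorial_le_mul_totient_factorial k hk
      _ = _ := by ring
  have hpow : N ^ m ≤ (2 * k ^ 3) ^ m * boxCount m A N := by
    calc N ^ m ≤ (2 * k ^ 2 * (Nat.totient k.factorial * Q)) ^ m := Nat.pow_le_pow_left hs m
      _ = (2 * k ^ 2) ^ m * (Nat.totient k.factorial * Q) ^ m := mul_pow _ _ _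
      _ ≤ (2 * k ^ 2) ^ m * (k ^ m * boxCount m A N) := Nat.mul_le_mul_left _ hmain
      _ = (2 * k ^ 2 * k) ^ m * boxCount m A N := by rw [mul_pow _ k]; ring
      _ = _ := by ring_nf
  have hpow' : (N : ℝ) ^ m ≤ (2 * (k : ℝ) ^ 3) ^ m * boxCount m A N := by exact_mod_cast hpow
  have hkR : (0 : ℝ) < k := by exact_mod_cast hk
  have hNR : (0 : ℝ) < N := by exact_mod_cast hN0
  rw [le_div_iff₀ (by positivity), ← mul_pow]
  have heq : 1 / (4 * (k : ℝ) ^ 3) * (2 * N) = N / (2 * (k : ℝ) ^ 3) := by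
    field_simp; norm_num
  rw [heq, div_pow, div_le_iff₀ (by positivity), mul_comm]
  exact hpow'

theorem le_lowerBoxDensity {m k : ℕ} {A : Set (Fin m → ℤ)} (hA : Plausible m k A)
    (hmk : m ≤ k) (hk : 1 ≤ k) : (1 / (4 * (k : ℝ) ^ 3)) ^ m ≤ lowerBoxDensity m A := by
  refine le_liminf_of_le ?_ ?_
  · refine IsBoundedUnder.isCoboundedUnder_ge ⟨2 ^ m, ?_⟩
    rw [eventually_map]
    filter_upwards [eventually_ge_atTop 1] with N hN
    have hNR : (1 : ℝ) ≤ N := by exact_mod_cast hN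
    rw [div_le_iff₀ (by positivity), ← mul_pow]
    calc (boxCount m A N : ℝ) ≤ (2 * N + 1) ^ m := by exact_mod_cast boxCount_le m N A
      _ ≤ _ := pow_le_pow_left₀ (by positivity) (by linarith) m
  · filter_upwards [eventually_ge_atTop (k.factorial * k)] with N hN
    exact le_boxCount_div hA hmk hk hN

theorem plausible_univ {m k : ℕ} (hmk : m ≤ k) : Plausible m k Set.univ :=
  ⟨fun _ _ _ => trivial, fun _ _ _ => trivial,
    fun _ _ _ => ⟨Fin.castLE hmk, Fin.castLE_injective hmk, trivial⟩⟩

theorem stmt_19 : ∃ C : ℝ, 0 < C ∧ ∀ m k : ℕ, 1 ≤ m → m ≤ k →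
    (k : ℝ) ≤ Real.exp (4 * m) → Real.exp (-C * m ^ 2) ≤ delta m k := by
  refine ⟨15, by norm_num, fun m k hm hmk hk => ?_⟩
  refine le_csInf ⟨_, Set.univ, plausible_univ hmk, rfl⟩ ?_
  rintro _ ⟨A, hA, rfl⟩
  refine le_trans ?_ (le_lowerBoxDensity hA hmk (hm.trans hmk))
  have hkR : (0 : ℝ) < k := by exact_mod_cast hm.trans hmk
  have hmR : (1 : ℝ) ≤ m := by exact_mod_cast hm
  have h4 : (4 : ℝ) ≤ Real.exp (3 * m) := by
    linarith [Real.add_one_le_exp (3 * (m : ℝ))]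
  have hbase : Real.exp (-15 * m) ≤ 1 / (4 * (k : ℝ) ^ 3) := by
    rw [neg_mul, Real.exp_neg, ← one_div]
    refine one_div_le_one_div_of_le (by positivity) ?_
    calc 4 * (k : ℝ) ^ 3 ≤ Real.exp (3 * m) * Real.exp (4 * m) ^ 3 := by gcongr
      _ = Real.exp (15 * m) := by
        rw [← Real.exp_nat_mul, ← Real.exp_add]; congr 1; push_cast; ring
  calc Real.exp (-15 * m ^ 2) = Real.exp (-15 * m) ^ m := by
        rw [← Real.exp_nat_mul]; congr 1; ring
    _ ≤ _ := pow_le_pow_left₀ (Real.exp_pos _).le hbase m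
end
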